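/- arXiv:1110.5369 — 3 statements merged into one kernel-verified Lean document; each statement's English description precedes it below -/
import Mathlib

section
/- The ℚ-algebra homomorphism ψ : ℚ[e_1,…,e_n] → H⁰(M_1(𝒜)) sending e_i to the Heaviside function x_i is surjective, and its kernel 𝓘₁ is the ideal generated by the following three families of polynomials: (1) e_i² − e_i for all i; (2) ∏_{i∈S⁺} e_i · ∏_{j∈S⁻} (e_j − 1) for all pairs of disjoint subsets S⁺, S⁻ ⊆ {1,…,n} such that ⋂_{i∈S⁺} H_i⁺ ∩ ⋂_{j∈S⁻} H_j⁻ = ∅; (3) ∏_{i∈S⁺} e_i · ∏_{j∈S⁻} (e_j − 1) − ∏_{i∈S⁺} (e_i − 1) · ∏_{j∈S⁻} e_j for all pairs of disjoint subsets S⁺, S⁻ ⊆ {1,…,n} such that ⋂_{i∈S⁺} H_i⁺ ∩ ⋂_{j∈S⁻} H_j⁻ = ∅ and ⋂_{i∈S⁺∪S⁻} H_i ≠ ∅. -/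
/-!
Modulo the relations `e i ^ 2 = e i` the polynomial ring becomes the ring of functions on the
vertices of the cube `{0, 1}^n`: every `p` is congruent to the sum over all `S ⊆ {1, …, n}` of the
value of `p` at the vertex `1_S` times the minterm of `S`. Under `ψ` the minterm of `S` becomes the
indicator function of the chamber on which exactly the `ω i` with `i ∈ S` are positive. Hence
`ψ p = 0` means that `p` vanishes at the vertices of the nonempty chambers, and the minterms of the
empty ones are, up to sign, in family (2). Chambers are convex, hence connected, so every locally
constant function is a combination of their indicators. Family (3) lies in the ideal of family (2):
reflection in a common point of the hyperplanes exchanges the two opposite cells, so both are empty.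
-/

/-!
Varchenko–Gelfand presentation of the ring of locally constant functions on the
complement of a real affine hyperplane arrangement (Statement 0).
-/

open MvPolynomial Set

variable {V : Type*} [NormedAddCommGroup V] [NormedSpace ℝ V] [FiniteDimensional ℝ V]
variable {n : ℕ}

/-- The complement `M₁(𝒜)` of the arrangement given by the affine forms `ω i`. -/
def M₁ (ω : Fin n → V →ᵃ[ℝ] ℝ) : Set V := {v | ∀ i, ω i v ≠ 0}

/-- The hyperplane `H i`. -/
def Hyp (ω : Fin n → V →ᵃ[ℝ] ℝ) (i : Fin n) : Set V := {v | ω i v = 0}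

/-- The open positive half-space `H i⁺`. -/
def Hplus (ω : Fin n → V →ᵃ[ℝ] ℝ) (i : Fin n) : Set V := {v | 0 < ω i v}

/-- The open negative half-space `H i⁻`. -/
def Hminus (ω : Fin n → V →ᵃ[ℝ] ℝ) (i : Fin n) : Set V := {v | ω i v < 0}

/-- The Heaviside function `x i`: the locally constant function on `M₁(𝒜)` which is
`1` on `H i⁺` and `0` on `H i⁻`. -/
noncomputable def heaviside (ω : Fin n → V →ᵃ[ℝ] ℝ) (i : Fin n) :
    LocallyConstant (M₁ ω) ℚ where
  toFun v := if 0 < ω i v.1 then 1 else 0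
  isLocallyConstant := by
    rw [IsLocallyConstant.iff_exists_open]
    rintro ⟨v, hv⟩
    rcases lt_or_gt_of_ne (hv i) with h | h
    · refine ⟨{w : M₁ ω | ω i w.1 < 0}, ?_, h, fun w hw => ?_⟩
      · exact (isOpen_lt ((ω i).continuous_of_finiteDimensional.comp
          continuous_subtype_val) continuous_const)
      · simp only [Set.mem_setOf_eq] at hw
        simp [not_lt.mpr hw.le, not_lt.mpr h.le]
    · refine ⟨{w : M₁ ω | 0 < ω i w.1}, ?_, h, fun w hw => ?_⟩
      · exact (isOpen_lt continuous_const ((ω i).continuous_of_finiteDimensional.comp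
          continuous_subtype_val))
      · simp only [Set.mem_setOf_eq] at hw
        simp [hw, h]

/-- Family (1): `e i ^ 2 - e i`. -/
def fam1 (n : ℕ) : Set (MvPolynomial (Fin n) ℚ) :=
  {p | ∃ i : Fin n, p = X i ^ 2 - X i}

/-- Family (2): `∏_{i ∈ S⁺} e i · ∏_{j ∈ S⁻} (e j - 1)` for disjoint `S⁺`, `S⁻` with
`⋂_{i∈S⁺} H i⁺ ∩ ⋂_{j∈S⁻} H j⁻ = ∅`. -/
def fam2 (ω : Fin n → V →ᵃ[ℝ] ℝ) : Set (MvPolynomial (Fin n) ℚ) :=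
  {p | ∃ Sp Sm : Finset (Fin n), Disjoint Sp Sm ∧
    (⋂ i ∈ Sp, Hplus ω i) ∩ (⋂ j ∈ Sm, Hminus ω j) = ∅ ∧
    p = (∏ i ∈ Sp, X i) * ∏ j ∈ Sm, (X j - 1)}

/-- Family (3): differences of the two orientations, when moreover
`⋂_{i ∈ S⁺ ∪ S⁻} H i ≠ ∅`. -/
def fam3 (ω : Fin n → V →ᵃ[ℝ] ℝ) : Set (MvPolynomial (Fin n) ℚ) :=
  {p | ∃ Sp Sm : Finset (Fin n), Disjoint Sp Sm ∧
    (⋂ i ∈ Sp, Hplus ω i) ∩ (⋂ j ∈ Sm, Hminus ω j) = ∅ ∧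
    (⋂ i ∈ (Sp ∪ Sm : Finset (Fin n)), Hyp ω i) ≠ ∅ ∧
    p = (∏ i ∈ Sp, X i) * (∏ j ∈ Sm, (X j - 1)) -
      (∏ i ∈ Sp, (X i - 1)) * ∏ j ∈ Sm, X j}

section BooleanCube

variable {ι R A : Type*} [Fintype ι] [DecidableEq ι] [CommRing R] [CommRing A] [Algebra R A]

/-- The minterm of `S` in the elements `a i`. When the `a i` are idempotents, thought of as
subsets, this is the atom lying inside exactly those `a i` with `i ∈ S`. -/
def minterm (a : ι → A) (S : Finset ι) : A :=
  (∏ i ∈ S, a i) * ∏ i ∈ Sᶜ, (1 - a i)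

lemma sum_minterm (a : ι → A) : ∑ S, minterm a S = 1 := by
  simpa [minterm, Finset.compl_eq_univ_sdiff] using
    (Finset.prod_add a (fun i => 1 - a i) Finset.univ).symm

lemma map_minterm {B F : Type*} [CommRing B] [FunLike F A B] [RingHomClass F A B] (f : F)
    (a : ι → A) (S : Finset ι) : f (minterm a S) = minterm (fun i => f (a i)) S := by
  simp [minterm]

lemma minterm_indicator (S T : Finset ι) :
    minterm ((T : Set ι).indicator (1 : ι → R)) S = if T = S then 1 else 0 := by
  have hcompl : ∀ i, 1 - (T : Set ι).indicator (1 : ι → R) i = if i ∉ T then 1 else 0 := by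
    intro i
    by_cases hi : i ∈ T <;> simp [hi]
  have heq : T = S ↔ (∀ i ∈ S, i ∈ T) ∧ ∀ i ∈ Sᶜ, i ∉ T := by
    simp only [Finset.ext_iff, Finset.mem_compl]
    grind
  simp only [minterm, hcompl]
  simp only [Set.indicator_apply, Finset.mem_coe, Pi.one_apply, Finset.prod_boole, heq, ite_and,
    ite_mul, one_mul, zero_mul]
  congr

lemma mul_minterm {a : ι → A} {i : ι} (ha : IsIdempotentElem (a i)) (S : Finset ι) :
    a i * minterm a S = (S : Set ι).indicator 1 i * minterm a S := by
  by_cases hi : i ∈ S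
  · rw [minterm, ← Finset.mul_prod_erase S a hi, ← mul_assoc, ← mul_assoc, ha.eq]
    simp [hi]
  · rw [minterm, ← Finset.mul_prod_erase Sᶜ _ (Finset.mem_compl.2 hi), mul_left_comm,
      ← mul_assoc (a i), ha.mul_one_sub_self]
    simp [hi]

lemma aeval_mul_minterm {a : ι → A} (ha : ∀ i, IsIdempotentElem (a i)) (p : MvPolynomial ι R)
    (S : Finset ι) :
    aeval a p * minterm a S = eval ((S : Set ι).indicator 1) p • minterm a S := by
  induction p using MvPolynomial.induction_on with
  | C r => simp [Algebra.smul_def]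
  | add p q hp hq => simp only [map_add, add_mul, add_smul, hp, hq]
  | mul_X p i hp =>
    rw [map_mul, aeval_X, mul_assoc, mul_minterm (ha i), mul_left_comm, hp, map_mul, eval_X]
    by_cases hi : i ∈ S <;> simp [hi]

lemma aeval_eq_sum_minterm {a : ι → A} (ha : ∀ i, IsIdempotentElem (a i))
    (p : MvPolynomial ι R) :
    aeval a p = ∑ S : Finset ι, eval ((S : Set ι).indicator 1) p • minterm a S := by
  simp only [← aeval_mul_minterm ha, ← Finset.mul_sum, sum_minterm, mul_one]

variable (ι R) in
/-- The relations making every variable idempotent; they cut out the Boolean cube `{0, 1}^ι`. -/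
def idempotentRelations : Set (MvPolynomial ι R) :=
  Set.range fun i => X i ^ 2 - X i

/-- Generators of the vanishing ideal of a set `P` of vertices of the Boolean cube. -/
lemma mem_span_idempotentRelations_union_minterm_iff (P : Set (Finset ι))
    (p : MvPolynomial ι R) :
    p ∈ Ideal.span (idempotentRelations ι R ∪ minterm X '' Pᶜ) ↔
      ∀ S ∈ P, eval ((S : Set ι).indicator 1) p = 0 := by
  set I := Ideal.span (idempotentRelations ι R ∪ minterm X '' Pᶜ)
  constructor
  · intro hp S hS
    suffices I ≤ RingHom.ker (eval ((S : Set ι).indicator 1)) from this hp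
    rw [Ideal.span_le]
    rintro _ (⟨i, rfl⟩ | ⟨T, hT, rfl⟩)
    · by_cases hi : i ∈ S <;> simp [hi]
    · have hne : S ≠ T := by rintro rfl; exact hT hS
      simp [map_minterm, minterm_indicator, hne]
  · intro hp
    have hidem : ∀ i, IsIdempotentElem (Ideal.Quotient.mkₐ R I (X i)) := by
      intro i
      have hi : X i ^ 2 - X i ∈ I := Ideal.subset_span (Or.inl ⟨i, rfl⟩)
      rw [IsIdempotentElem, ← map_mul, ← pow_two]
      exact Ideal.Quotient.eq.2 hi
    have hminterm : ∀ S ∉ P, minterm (fun i => Ideal.Quotient.mkₐ R I (X i)) S = 0 := by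
      intro S hS
      rw [← map_minterm]
      exact Ideal.Quotient.eq_zero_iff_mem.2 (Ideal.subset_span (Or.inr ⟨S, hS, rfl⟩))
    have hmk : Ideal.Quotient.mkₐ R I p = 0 := by
      rw [← aeval_X_left_apply p, comp_aeval_apply, aeval_eq_sum_minterm hidem]
      refine Finset.sum_eq_zero fun S _ => ?_
      by_cases hS : S ∈ P
      · rw [hp S hS, zero_smul]
      · rw [hminterm S hS, smul_zero]
    exact Ideal.Quotient.eq_zero_iff_mem.1 hmk

end BooleanCube

section ClopenFamily

variable {ι α R : Type*} {U : ι → Set α} [CommRing R]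

lemma aeval_charFn_apply [TopologicalSpace α] (hU : ∀ i, IsClopen (U i)) (p : MvPolynomial ι R)
    (x : α) :
    aeval (fun i => LocallyConstant.charFn R (hU i)) p x =
      eval (fun i => (U i).indicator 1 x) p := by
  change LocallyConstant.evalₐ R x (aeval _ p) = _
  rw [comp_aeval_apply, aeval_eq_eval]
  rfl

variable [Fintype ι]

open scoped Classical in
/-- The set of indices `i` with `x ∈ U i`; the fibres of `membershipPattern U` are the atoms of the
Boolean algebra of sets generated by the family `U`. -/
noncomputable def membershipPattern (U : ι → Set α) (x : α) : Finset ι :=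
  {i | x ∈ U i}

lemma mem_membershipPattern {x : α} {i : ι} : i ∈ membershipPattern U x ↔ x ∈ U i := by
  simp [membershipPattern]

lemma indicator_membershipPattern (x : α) :
    (membershipPattern U x : Set ι).indicator (1 : ι → R) = fun i => (U i).indicator 1 x := by
  ext i
  by_cases hi : x ∈ U i <;> simp [hi, mem_membershipPattern]

variable [TopologicalSpace α]

lemma ker_aeval_charFn [DecidableEq ι] (hU : ∀ i, IsClopen (U i)) :
    RingHom.ker (aeval fun i => LocallyConstant.charFn R (hU i)) =
      Ideal.span (idempotentRelations ι R ∪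
        minterm X '' (Set.range (membershipPattern U))ᶜ) := by
  ext p
  simp only [mem_span_idempotentRelations_union_minterm_iff, Set.forall_mem_range,
    indicator_membershipPattern, ← aeval_charFn_apply hU, RingHom.mem_ker,
    LocallyConstant.ext_iff, LocallyConstant.zero_apply]

lemma aeval_charFn_surjective (hU : ∀ i, IsClopen (U i))
    (hatom : ∀ S, IsPreconnected (membershipPattern U ⁻¹' {S})) :
    Function.Surjective (aeval (R := R) fun i => LocallyConstant.charFn R (hU i)) := by
  classical
  intro f
  have hf : Function.FactorsThrough f (membershipPattern U) := fun x y hxy =>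
    f.isLocallyConstant.apply_eq_of_isPreconnected (hatom (membershipPattern U y)) hxy rfl
  refine ⟨∑ S, C (Function.extend (membershipPattern U) f 0 S) * minterm X S, ?_⟩
  ext x
  rw [aeval_charFn_apply, ← indicator_membershipPattern, map_sum]
  simp [map_minterm, minterm_indicator, hf.extend_apply]

end ClopenFamily

section Arrangement

variable {ι E R : Type*} [AddCommGroup E] [Module ℝ E] [CommRing R] {ω : ι → E →ᵃ[ℝ] ℝ}

/-- The open cell cut out by requiring `ω i` to be positive for `i ∈ P` and negative for
`i ∈ N`. -/
def openCell (ω : ι → E →ᵃ[ℝ] ℝ) (P N : Finset ι) : Set E :=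
  {v | (∀ i ∈ P, 0 < ω i v) ∧ ∀ j ∈ N, ω j v < 0}

lemma convex_openCell (P N : Finset ι) : Convex ℝ (openCell ω P N) := by
  have h : openCell ω P N =
      (⋂ i ∈ P, ω i ⁻¹' Set.Ioi 0) ∩ ⋂ j ∈ N, ω j ⁻¹' Set.Iio 0 := by
    ext v
    simp [openCell]
  rw [h]
  exact (convex_iInter₂ fun i _ => (convex_Ioi 0).affine_preimage (ω i)).inter
    (convex_iInter₂ fun j _ => (convex_Iio 0).affine_preimage (ω j))

lemma openCell_swap_eq_empty {P N : Finset ι} {x : E} (hP : ∀ i ∈ P, ω i x = 0)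
    (hN : ∀ j ∈ N, ω j x = 0) (h : openCell ω P N = ∅) : openCell ω N P = ∅ := by
  have hreflect : ∀ i v, ω i x = 0 → ω i (AffineEquiv.pointReflection ℝ x v) = -ω i v := by
    intro i v hi
    rw [AffineEquiv.pointReflection_apply, AffineMap.map_vadd, hi, AffineMap.linearMap_vsub, hi]
    simp
  rw [Set.eq_empty_iff_forall_notMem] at h ⊢
  rintro v ⟨hpos, hneg⟩
  refine h (AffineEquiv.pointReflection ℝ x v) ⟨fun i hi => ?_, fun j hj => ?_⟩
  · rw [hreflect i v (hP i hi)]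
    exact neg_pos.2 (hneg i hi)
  · rw [hreflect j v (hN j hj)]
    exact neg_neg_iff_pos.2 (hpos j hj)

/-- The complement of the arrangement of the hyperplanes `ω i = 0`. -/
def arrangementComplement (ω : ι → E →ᵃ[ℝ] ℝ) : Set E :=
  {v | ∀ i, ω i v ≠ 0}

/-- The part of the complement of the arrangement on which `ω i` is positive. -/
def positiveSide (ω : ι → E →ᵃ[ℝ] ℝ) (i : ι) : Set (arrangementComplement ω) :=
  {v | 0 < ω i v}

lemma isClopen_positiveSide [TopologicalSpace E] {i : ι} (hω : Continuous (ω i)) :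
    IsClopen (positiveSide ω i) := by
  have hcont : Continuous fun v : arrangementComplement ω => ω i v :=
    hω.comp continuous_subtype_val
  have hnonneg : positiveSide ω i = {v : arrangementComplement ω | 0 ≤ ω i v} := by
    ext v
    exact ⟨fun h : 0 < ω i v => h.le, fun h => lt_of_le_of_ne h (v.2 i).symm⟩
  exact ⟨hnonneg ▸ isClosed_le continuous_const hcont, isOpen_lt continuous_const hcont⟩

lemma openCell_compl_subset_arrangementComplement [Fintype ι] [DecidableEq ι] (S : Finset ι) :
    openCell ω S Sᶜ ⊆ arrangementComplement ω := by
  intro v hv i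
  by_cases hi : i ∈ S
  · exact (hv.1 i hi).ne'
  · exact (hv.2 i (Finset.mem_compl.2 hi)).ne

lemma membershipPattern_positiveSide_eq_iff [Fintype ι] [DecidableEq ι] {S : Finset ι}
    {v : arrangementComplement ω} :
    membershipPattern (positiveSide ω) v = S ↔ (v : E) ∈ openCell ω S Sᶜ := by
  have hneg : ∀ i, ω i v < 0 ↔ ¬ 0 < ω i v := fun i =>
    ⟨fun h => h.not_gt, fun h => lt_of_le_of_ne (not_lt.1 h) (v.2 i)⟩
  have hmem : ∀ i, i ∈ membershipPattern (positiveSide ω) v ↔ 0 < ω i v := fun _ =>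
    mem_membershipPattern
  simp only [openCell, Set.mem_ofPred_eq, Finset.ext_iff, hmem, Finset.mem_compl, hneg]
  grind

lemma isPreconnected_fiber_membershipPattern [Fintype ι] [TopologicalSpace E]
    [IsTopologicalAddGroup E] [ContinuousSMul ℝ E] (S : Finset ι) :
    IsPreconnected (membershipPattern (positiveSide ω) ⁻¹' {S}) := by
  classical
  have hfiber : membershipPattern (positiveSide ω) ⁻¹' {S} =
      ((↑) ⁻¹' openCell ω S Sᶜ : Set (arrangementComplement ω)) := by
    ext v
    exact membershipPattern_positiveSide_eq_iff
  rw [hfiber, ← Topology.IsInducing.subtypeVal.isPreconnected_image,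
    Subtype.image_preimage_coe,
    Set.inter_eq_right.2 (openCell_compl_subset_arrangementComplement S)]
  exact (convex_openCell S Sᶜ).isPreconnected

variable (R) in
/-- The product `∏_{i ∈ P} e i · ∏_{j ∈ N} (e j - 1)`, which up to sign represents the
indicator function of `openCell ω P N`. -/
noncomputable def signedProd (P N : Finset ι) : MvPolynomial ι R :=
  (∏ i ∈ P, X i) * ∏ j ∈ N, (X j - 1)

variable (R) in
/-- Family (2) over an arbitrary coefficient ring: the signed products of the empty cells. -/
def emptyCellRelations (ω : ι → E →ᵃ[ℝ] ℝ) : Set (MvPolynomial ι R) :=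
  {p | ∃ P N : Finset ι, Disjoint P N ∧ openCell ω P N = ∅ ∧ p = signedProd R P N}

variable (R) in
/-- Family (3) over an arbitrary coefficient ring: the differences of the signed products of two
opposite cells, the first of them empty, whose bounding hyperplanes have a common point. -/
def oppositeCellRelations (ω : ι → E →ᵃ[ℝ] ℝ) : Set (MvPolynomial ι R) :=
  {p | ∃ P N : Finset ι, Disjoint P N ∧ openCell ω P N = ∅ ∧
    (∃ v, (∀ i ∈ P, ω i v = 0) ∧ ∀ j ∈ N, ω j v = 0) ∧
    p = signedProd R P N - signedProd R N P}

lemma minterm_X_eq_signedProd [Fintype ι] [DecidableEq ι] (S : Finset ι) :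
    minterm X S = (-1) ^ Sᶜ.card * signedProd R S Sᶜ := by
  simp only [minterm, signedProd, ← neg_sub (X _) 1, Finset.prod_neg]
  ring

lemma oppositeCellRelations_subset_span :
    oppositeCellRelations R ω ⊆ Ideal.span (emptyCellRelations R ω) := by
  rintro _ ⟨P, N, hdisj, hempty, ⟨v, hP, hN⟩, rfl⟩
  exact sub_mem (Ideal.subset_span ⟨P, N, hdisj, hempty, rfl⟩)
    (Ideal.subset_span ⟨N, P, hdisj.symm, openCell_swap_eq_empty hP hN hempty, rfl⟩)

variable [TopologicalSpace E]

lemma aeval_signedProd_eq_zero (hω : ∀ i, Continuous (ω i)) {P N : Finset ι}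
    (h : openCell ω P N = ∅) :
    aeval (fun i => LocallyConstant.charFn R (isClopen_positiveSide (hω i))) (signedProd R P N) =
      0 := by
  ext v
  have hv : ∃ i, i ∈ P ∧ v ∉ positiveSide ω i ∨ i ∈ N ∧ v ∈ positiveSide ω i := by
    by_contra! hcell
    refine Set.eq_empty_iff_forall_notMem.1 h v ⟨fun i hi => (hcell i).1 hi, fun j hj => ?_⟩
    exact lt_of_le_of_ne (not_lt.1 ((hcell j).2 hj)) (v.2 j)
  rw [aeval_charFn_apply, signedProd, LocallyConstant.zero_apply]
  simp only [map_mul, map_prod, map_sub, map_one, eval_X]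
  obtain ⟨i, ⟨hiP, hi⟩ | ⟨hiN, hi⟩⟩ := hv
  · rw [Finset.prod_eq_zero hiP (by simp [hi]), zero_mul]
  · rw [Finset.prod_eq_zero hiN (by simp [hi]), mul_zero]

lemma ker_aeval_charFn_positiveSide [Finite ι] (hω : ∀ i, Continuous (ω i)) :
    RingHom.ker (aeval fun i => LocallyConstant.charFn R (isClopen_positiveSide (hω i))) =
      Ideal.span (idempotentRelations ι R ∪ emptyCellRelations R ω) := by
  classical
  cases nonempty_fintype ι
  apply le_antisymm
  · rw [ker_aeval_charFn, Ideal.span_le]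
    rintro _ (h | ⟨S, hS, rfl⟩)
    · exact Ideal.subset_span (Or.inl h)
    · have hempty : openCell ω S Sᶜ = ∅ := by
        refine Set.eq_empty_of_forall_notMem fun v hv => hS ?_
        exact ⟨⟨v, openCell_compl_subset_arrangementComplement S hv⟩,
          membershipPattern_positiveSide_eq_iff.2 hv⟩
      rw [minterm_X_eq_signedProd]
      exact Ideal.mul_mem_left _ _
        (Ideal.subset_span (Or.inr ⟨S, Sᶜ, disjoint_compl_right, hempty, rfl⟩))
  · rw [Ideal.span_le]
    rintro _ (h | ⟨P, N, -, hempty, rfl⟩)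
    · rw [ker_aeval_charFn]
      exact Ideal.subset_span (Or.inl h)
    · exact aeval_signedProd_eq_zero hω hempty

theorem vg_presentation_general (R : Type*) [CommRing R] [Finite ι]
    [IsTopologicalAddGroup E] [ContinuousSMul ℝ E] (hω : ∀ i, Continuous (ω i)) :
    Function.Surjective
      (aeval (R := R) fun i => LocallyConstant.charFn R (isClopen_positiveSide (hω i))) ∧
    RingHom.ker (aeval fun i => LocallyConstant.charFn R (isClopen_positiveSide (hω i))) =
      Ideal.span
        (idempotentRelations ι R ∪ emptyCellRelations R ω ∪ oppositeCellRelations R ω) := by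
  cases nonempty_fintype ι
  refine ⟨aeval_charFn_surjective _ isPreconnected_fiber_membershipPattern, ?_⟩
  have hopposite : Ideal.span (oppositeCellRelations R ω) ≤
      Ideal.span (idempotentRelations ι R ∪ emptyCellRelations R ω) :=
    Ideal.span_le.2 (oppositeCellRelations_subset_span.trans
      (Ideal.span_mono Set.subset_union_right))
  rw [ker_aeval_charFn_positiveSide hω, Ideal.span_union _ (oppositeCellRelations R ω),
    sup_eq_left.2 hopposite]

end Arrangement

lemma heaviside_eq_charFn (ω : Fin n → V →ᵃ[ℝ] ℝ) (i : Fin n) :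
    heaviside ω i = LocallyConstant.charFn ℚ
      (isClopen_positiveSide (ω i).continuous_of_finiteDimensional) := by
  ext v
  by_cases hv : 0 < ω i v
  · exact (if_pos hv).trans (Set.indicator_of_mem (s := positiveSide ω i) hv 1).symm
  · exact (if_neg hv).trans (Set.indicator_of_notMem (s := positiveSide ω i) hv 1).symm

lemma fam1_eq_idempotentRelations : fam1 n = idempotentRelations (Fin n) ℚ := by
  ext p
  simp [fam1, idempotentRelations, eq_comm]

omit [FiniteDimensional ℝ V] in
lemma iInter_Hplus_inter_iInter_Hminus (ω : Fin n → V →ᵃ[ℝ] ℝ) (P N : Finset (Fin n)) :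
    (⋂ i ∈ P, Hplus ω i) ∩ (⋂ j ∈ N, Hminus ω j) = openCell ω P N := by
  ext v
  simp [openCell, Hplus, Hminus]

omit [FiniteDimensional ℝ V] in
lemma fam2_eq_emptyCellRelations (ω : Fin n → V →ᵃ[ℝ] ℝ) : fam2 ω = emptyCellRelations ℚ ω := by
  simp only [fam2, emptyCellRelations, signedProd, iInter_Hplus_inter_iInter_Hminus]

omit [FiniteDimensional ℝ V] in
lemma fam3_eq_oppositeCellRelations (ω : Fin n → V →ᵃ[ℝ] ℝ) :
    fam3 ω = oppositeCellRelations ℚ ω := by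
  have hflat : ∀ P N : Finset (Fin n), (⋂ i ∈ P ∪ N, Hyp ω i) ≠ ∅ ↔
      ∃ v, (∀ i ∈ P, ω i v = 0) ∧ ∀ j ∈ N, ω j v = 0 := by
    intro P N
    simp [← Set.nonempty_iff_ne_empty, Set.Nonempty, Hyp, or_imp, forall_and]
  have hswap : ∀ P N : Finset (Fin n),
      (∏ i ∈ P, (X i - 1)) * ∏ j ∈ N, X j = signedProd ℚ N P := fun P N => mul_comm _ _
  simp only [fam3, oppositeCellRelations, iInter_Hplus_inter_iInter_Hminus, hflat, hswap]
  rfl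

/-- Varchenko–Gelfand. The map `ψ : ℚ[e₁,…,eₙ] → H⁰(M₁(𝒜))` sending
`e i` to the Heaviside function `x i` is surjective, and its kernel is generated by
families (1), (2) and (3). -/
theorem vg_presentation (ω : Fin n → V →ᵃ[ℝ] ℝ) (hω : ∀ i, (ω i).linear ≠ 0) :
    Function.Surjective (MvPolynomial.aeval (R := ℚ) (heaviside ω)) ∧
    RingHom.ker (MvPolynomial.aeval (R := ℚ) (heaviside ω)).toRingHom =
      Ideal.span (fam1 n ∪ fam2 ω ∪ fam3 ω) := by
  rw [funext (heaviside_eq_charFn ω), fam1_eq_idempotentRelations, fam2_eq_emptyCellRelations,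
    fam3_eq_oppositeCellRelations]
  exact vg_presentation_general ℚ fun i => (ω i).continuous_of_finiteDimensional
end

section
/- The kernel 𝓘₁ of the ℚ-algebra homomorphism ψ : ℚ[e_1,…,e_n] → H⁰(M_1(𝒜)) sending e_i to the Heaviside function x_i is already generated by the two families: (1) e_i² − e_i for all i; (2) ∏_{i∈S⁺} e_i · ∏_{j∈S⁻} (e_j − 1) for all pairs of disjoint subsets S⁺, S⁻ ⊆ {1,…,n} such that ⋂_{i∈S⁺} H_i⁺ ∩ ⋂_{j∈S⁻} H_j⁻ = ∅. -/
/-!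
Varchenko–Gelfand presentation of the ring of locally constant functions on the
complement of a real affine hyperplane arrangement (Statement 1).
-/

open MvPolynomial Set

variable {V : Type*} [NormedAddCommGroup V] [NormedSpace ℝ V] [FiniteDimensional ℝ V]
variable {n : ℕ}

/-!
Modulo the relations `e i ^ 2 = e i`, the polynomial ring becomes the ring of functions on the
cube `{0,1}^ι`: the vertex polynomials sum to `1`, and multiplying the vertex polynomial of `T` by
`p` amounts to multiplying it by the scalar `p(1_T)`. Hence `p` is congruent to the sum over `T` of
`p(1_T)` times the vertex polynomial of `T`.

If `p` is in the kernel, every summand is in the span. Either the sign vector `T` is realised by a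
point, which then lies in the complement, and evaluating there gives `p(1_T) = 0`; or the cell with
sign vector `T` is empty, and the vertex polynomial of `T` is up to sign in the second family.
-/

theorem sub_C_eval_mem_of_X_sub_C_mem {σ R : Type*} [CommRing R] {J : Ideal (MvPolynomial σ R)}
    {a : σ → R} {p : MvPolynomial σ R} (hJ : ∀ i ∈ p.vars, X i - C (a i) ∈ J) :
    p - C (eval a p) ∈ J := by
  rw [← Ideal.Quotient.mk_eq_mk_iff_sub_mem]
  refine hom_congr_vars (f₁ := Ideal.Quotient.mk J)
    (f₂ := (Ideal.Quotient.mk J).comp (C.comp (eval a))) ?_ (fun i hi _ => ?_) rfl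
  · ext
    simp
  · simpa using (Ideal.Quotient.mk_eq_mk_iff_sub_mem _ _).mpr (hJ i hi)

section Cube

variable {ι R : Type*} [Fintype ι] [DecidableEq ι] [CommRing R]

/-- The vertex polynomial of `T`: on `{0,1}^ι` it takes the values of the indicator function of the
vertex `1_T`, which is encoded as `Set.indicator T 1`. The factors `1 - X j`, rather than the
`X j - 1` of the second family, make these polynomials sum to `1`. -/
noncomputable def vertexPoly (R : Type*) [CommRing R] (T : Finset ι) : MvPolynomial ι R :=
  (∏ i ∈ T, X i) * ∏ j ∈ Tᶜ, (1 - X j)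

theorem sum_vertexPoly : ∑ T : Finset ι, vertexPoly R T = 1 := by
  simp only [vertexPoly, ← Fintype.prod_add, add_sub_cancel, Finset.prod_const_one]

theorem vertexPoly_eq_neg_one_pow_mul (T : Finset ι) :
    vertexPoly R T = (-1) ^ Tᶜ.card * ((∏ i ∈ T, X i) * ∏ j ∈ Tᶜ, (X j - 1)) := by
  rw [vertexPoly, mul_left_comm, ← Finset.prod_neg]
  simp only [neg_sub]

variable {I : Ideal (MvPolynomial ι R)} (hI : ∀ i, X i ^ 2 - X i ∈ I)
include hI

theorem X_sub_C_mul_vertexPoly_mem (T : Finset ι) (i : ι) :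
    (X i - C (Set.indicator T 1 i)) * vertexPoly R T ∈ I := by
  refine I.mem_of_dvd ?_ (hI i)
  by_cases hi : i ∈ T
  · have hdvd : X i ∣ vertexPoly R T := (Finset.dvd_prod_of_mem _ hi).mul_right _
    convert mul_dvd_mul_left (X i - 1) hdvd using 1
    · ring
    · simp [hi]
  · have hdvd : 1 - X i ∣ vertexPoly R T :=
      (Finset.dvd_prod_of_mem _ (Finset.mem_compl.mpr hi)).mul_left _
    rw [← neg_dvd]
    convert mul_dvd_mul_left (X i) hdvd using 1
    · ring
    · simp [hi]

-- The `p` with `p * vertexPoly R T ∈ I` form an ideal, so it suffices to treat the variables.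
theorem sub_C_eval_mul_vertexPoly_mem (T : Finset ι) (p : MvPolynomial ι R) :
    (p - C (eval (Set.indicator T 1) p)) * vertexPoly R T ∈ I :=
  Submodule.mem_colon_singleton.mp <| sub_C_eval_mem_of_X_sub_C_mem fun i _ =>
    Submodule.mem_colon_singleton.mpr (X_sub_C_mul_vertexPoly_mem hI T i)

theorem mem_of_forall_eval_eq_zero_or_vertexPoly_mem {p : MvPolynomial ι R}
    (hp : ∀ T : Finset ι, eval (Set.indicator T 1) p = 0 ∨ vertexPoly R T ∈ I) : p ∈ I := by
  rw [← mul_one p, ← sum_vertexPoly, Finset.mul_sum]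
  refine I.sum_mem fun T _ => ?_
  rcases hp T with hzero | hmem
  · simpa only [hzero, C_0, sub_zero] using sub_C_eval_mul_vertexPoly_mem hI T p
  · exact I.mul_mem_left p hmem

end Cube

theorem mem_ker_aeval_locallyConstant_iff {ι α R : Type*} [TopologicalSpace α] [CommSemiring R]
    {x : ι → LocallyConstant α R} {p : MvPolynomial ι R} :
    p ∈ RingHom.ker (aeval (R := R) x).toRingHom ↔ ∀ v, eval (fun i => x i v) p = 0 := by
  have aeval_apply (v : α) : aeval x p v = eval (fun i => x i v) p :=
    comp_aeval_apply (φ := LocallyConstant.evalₐ R v) x p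
  simp only [← aeval_apply]
  exact LocallyConstant.ext_iff

section SignCells

variable {ι α S : Type*} [LinearOrder S] [Zero S]

/-- The set of points at which the functions `ω i` are positive for `i ∈ Sp` and negative for
`i ∈ Sm`. -/
def signCell (ω : ι → α → S) (Sp Sm : Finset ι) : Set α :=
  (⋂ i ∈ Sp, {v | 0 < ω i v}) ∩ ⋂ j ∈ Sm, {v | ω j v < 0}

theorem mem_signCell {ω : ι → α → S} {Sp Sm : Finset ι} {v : α} :
    v ∈ signCell ω Sp Sm ↔ (∀ i ∈ Sp, 0 < ω i v) ∧ ∀ j ∈ Sm, ω j v < 0 := by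
  simp [signCell]

theorem ne_zero_of_mem_signCell_compl [Fintype ι] [DecidableEq ι] {ω : ι → α → S} {T : Finset ι}
    {v : α} (hv : v ∈ signCell ω T Tᶜ) (i : ι) : ω i v ≠ 0 := by
  rw [mem_signCell] at hv
  by_cases hi : i ∈ T
  · exact (hv.1 i hi).ne'
  · exact (hv.2 i (Finset.mem_compl.mpr hi)).ne

theorem ite_pos_eq_indicator_of_mem_signCell_compl {R : Type*} [Zero R] [One R] [Fintype ι]
    [DecidableEq ι] {ω : ι → α → S} {T : Finset ι} {v : α} (hv : v ∈ signCell ω T Tᶜ) :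
    (fun i => if 0 < ω i v then (1 : R) else 0) = Set.indicator T 1 := by
  rw [mem_signCell] at hv
  funext i
  by_cases hi : i ∈ T
  · simp [hi, hv.1 i hi]
  · simp [hi, (hv.2 i (Finset.mem_compl.mpr hi)).le]

theorem prod_ite_pos_mul_prod_sub_one_eq_zero {R : Type*} [CommRing R] {ω : ι → α → S}
    {Sp Sm : Finset ι} {v : α} (hv : v ∉ signCell ω Sp Sm) (hne : ∀ j ∈ Sm, ω j v ≠ 0) :
    (∏ i ∈ Sp, if 0 < ω i v then (1 : R) else 0) *
      ∏ j ∈ Sm, ((if 0 < ω j v then 1 else 0) - 1) = 0 := by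
  rw [mem_signCell, not_and_or] at hv
  push Not at hv
  rcases hv with ⟨i, hi, hnonpos⟩ | ⟨j, hj, hnonneg⟩
  · rw [Finset.prod_eq_zero hi (if_neg hnonpos.not_gt), zero_mul]
  · have hpos : 0 < ω j v := hnonneg.lt_of_ne' (hne j hj)
    rw [Finset.prod_eq_zero hj (by rw [if_pos hpos, sub_self]), mul_zero]

end SignCells

theorem vg_kernel_two_families_general {ι α S R : Type*} [Finite ι] [TopologicalSpace α]
    [LinearOrder S] [Zero S] [CommRing R] (ω : ι → α → S)
    (x : ι → LocallyConstant {v | ∀ i, ω i v ≠ 0} R)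
    (hx : ∀ i v, x i v = if 0 < ω i v then 1 else 0) :
    RingHom.ker (aeval (R := R) x).toRingHom =
      Ideal.span ({p | ∃ i, p = X i ^ 2 - X i} ∪
        {p | ∃ Sp Sm : Finset ι, Disjoint Sp Sm ∧ signCell ω Sp Sm = ∅ ∧
          p = (∏ i ∈ Sp, X i) * ∏ j ∈ Sm, (X j - 1)}) := by
  classical
  have := Fintype.ofFinite ι
  have mem_ker_iff (p : MvPolynomial ι R) : p ∈ RingHom.ker (aeval (R := R) x).toRingHom ↔
      ∀ v : {v | ∀ i, ω i v ≠ 0}, eval (fun i => if 0 < ω i v then (1 : R) else 0) p = 0 := by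
    simp only [mem_ker_aeval_locallyConstant_iff, hx]
  apply le_antisymm
  · intro p hp
    rw [mem_ker_iff] at hp
    refine mem_of_forall_eval_eq_zero_or_vertexPoly_mem
      (fun i => Ideal.subset_span (.inl ⟨i, rfl⟩)) fun T => ?_
    rcases (signCell ω T Tᶜ).eq_empty_or_nonempty with hempty | ⟨v, hv⟩
    · right
      rw [vertexPoly_eq_neg_one_pow_mul]
      exact Ideal.mul_mem_left _ _
        (Ideal.subset_span (.inr ⟨T, Tᶜ, disjoint_compl_right, hempty, rfl⟩))
    · left
      rw [← ite_pos_eq_indicator_of_mem_signCell_compl hv]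
      exact hp ⟨v, ne_zero_of_mem_signCell_compl hv⟩
  · rw [Ideal.span_le]
    rintro _ (⟨i, rfl⟩ | ⟨Sp, Sm, -, hempty, rfl⟩)
    · exact (mem_ker_iff _).mpr fun v => by simp
    · exact (mem_ker_iff _).mpr fun v => by
        have hv : v.1 ∉ signCell ω Sp Sm := hempty ▸ notMem_empty v.1
        simpa using prod_ite_pos_mul_prod_sub_one_eq_zero hv fun j _ => v.2 j

/-- The kernel of `ψ : ℚ[e₁,…,eₙ] → H⁰(M₁(𝒜))` is already generated by
families (1) and (2). -/
theorem vg_kernel_two_families (ω : Fin n → V →ᵃ[ℝ] ℝ) (hω : ∀ i, (ω i).linear ≠ 0) :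
    RingHom.ker (MvPolynomial.aeval (R := ℚ) (heaviside ω)).toRingHom =
      Ideal.span (fam1 n ∪ fam2 ω) :=
  vg_kernel_two_families_general (fun i => ω i) (heaviside ω) fun _ _ => rfl
end

section
/- Let (E, 𝒞) be a loop-free oriented matroid given by its signed circuits. With respect to the filtration of P(𝒞) by polynomial degree in the generators x_a, the associated graded algebra ⊕_{k≥0} P^k/P^{k−1} of P(𝒞) is isomorphic as a graded ℚ-algebra to 𝔸(𝒞). -/
/-!
Sending the class of `p ∈ Pᵏ` to the class of its homogeneous component of degree `k` is the desired
isomorphism once the ideal of leading forms of `pIdeal 𝒞` is known to be `aIdeal 𝒞`. It contains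
`aIdeal 𝒞`, since `∂̃(Y)` is the leading form of a combination of the generators of `pIdeal 𝒞`
attached to `Y` and `-Y`. Equality follows because the monomials without broken circuits span the
quotient by `aIdeal 𝒞` and are linearly independent modulo `pIdeal 𝒞`. The former holds because
`∂̃(Y)` rewrites a monomial containing a broken circuit into smaller ones. For the latter,
`pIdeal 𝒞` vanishes at the topes, and evaluating a combination of these monomials at all topes
recovers its coefficients, by deletion and contraction of the largest element.
-/

/-!
Statement 4: for a loop-free oriented matroid `(E, 𝒞)` given by its signed circuits,
the associated graded algebra of the degree filtration on the Gelfand–Rybnikov algebra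
`P(𝒞)` is isomorphic as a graded `ℚ`-algebra to the Cordovil algebra `𝔸(𝒞)`.
Signed subsets of `E` are encoded as pairs of disjoint finsets `(X⁺, X⁻)`.
-/

open MvPolynomial

variable {E : Type*} [Fintype E] [LinearOrder E]

/-- The ideal defining `P(𝒞)`: generated by `x a ^ 2 - x a` and
`(∏_{a∈X⁺} x a)·(∏_{a∈X⁻} (1 - x a))` for `X ∈ 𝒞`. -/
noncomputable def pIdeal (𝒞 : Set (Finset E × Finset E)) : Ideal (MvPolynomial E ℚ) :=
  Ideal.span ({p | ∃ a : E, p = X a ^ 2 - X a} ∪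
    {p | ∃ C ∈ 𝒞, p = (∏ a ∈ C.1, X a) * ∏ a ∈ C.2, (1 - X a)})

/-- The algebra `P(𝒞)`. -/
abbrev PAlg (𝒞 : Set (Finset E × Finset E)) := MvPolynomial E ℚ ⧸ pIdeal 𝒞

/-- The degree filtration on `P(𝒞)`: `Pᵏ` is the image of the polynomials of total
degree at most `k`. -/
noncomputable def pFil (𝒞 : Set (Finset E × Finset E)) (k : ℕ) :
    Submodule ℚ (PAlg 𝒞) :=
  Submodule.map (Ideal.Quotient.mkₐ ℚ (pIdeal 𝒞)).toLinearMap
    (MvPolynomial.restrictTotalDegree E ℚ k)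

/-- The previous step `Pᵏ⁻¹` of the filtration, with `P⁻¹ = 0`. -/
noncomputable def pPrev (𝒞 : Set (Finset E × Finset E)) : ℕ → Submodule ℚ (PAlg 𝒞)
  | 0 => ⊥
  | (k + 1) => pFil 𝒞 k

/-- The `k`-th graded piece `Pᵏ/Pᵏ⁻¹` of the associated graded of the filtration. -/
noncomputable abbrev pGr (𝒞 : Set (Finset E × Finset E)) (k : ℕ) :=
  ↥(pFil 𝒞 k) ⧸ Submodule.comap (pFil 𝒞 k).subtype (pPrev 𝒞 k)

/-- The boundary `∂̃(X) = Σ_{a∈X̲} Φ_X(a) ∏_{b∈X̲, b≠a} x_b` of a signed subset. -/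
noncomputable def tpartial (C : Finset E × Finset E) : MvPolynomial E ℚ :=
  ∑ a ∈ C.1 ∪ C.2, (if a ∈ C.1 then (1 : MvPolynomial E ℚ) else -1) *
    ∏ b ∈ (C.1 ∪ C.2).erase a, X b

/-- The ideal defining the Cordovil algebra `𝔸(𝒞)`: generated by `x a ^ 2` and by
`∂̃(X)` for the circuits `X ∈ 𝒞` normalized so that the least element of the support
lies in `X⁺`. -/
noncomputable def aIdeal (𝒞 : Set (Finset E × Finset E)) : Ideal (MvPolynomial E ℚ) :=
  Ideal.span ({p | ∃ a : E, p = X a ^ 2} ∪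
    {p | ∃ C ∈ 𝒞, (∃ h : (C.1 ∪ C.2).Nonempty, (C.1 ∪ C.2).min' h ∈ C.1) ∧
      p = tpartial C})

/-- The Cordovil algebra `𝔸(𝒞)`. -/
abbrev AAlg (𝒞 : Set (Finset E × Finset E)) := MvPolynomial E ℚ ⧸ aIdeal 𝒞

/-- The degree-`k` graded component of `𝔸(𝒞)`. -/
noncomputable def aGrade (𝒞 : Set (Finset E × Finset E)) (k : ℕ) :
    Submodule ℚ (AAlg 𝒞) :=
  Submodule.map (Ideal.Quotient.mkₐ ℚ (aIdeal 𝒞)).toLinearMap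
    (MvPolynomial.homogeneousSubmodule E ℚ k)

section SignedFamilies

variable {α : Type*} [DecidableEq α] {𝒱 : Set (Finset α × Finset α)} {A t : Finset α} {e : α}

/-- The elimination axiom for the signed circuits of an oriented matroid. -/
def SignedElimination (𝒱 : Set (Finset α × Finset α)) : Prop :=
  ∀ X ∈ 𝒱, ∀ Y ∈ 𝒱, X ≠ Y.swap → ∀ e ∈ X.1 ∩ Y.2,
    ∃ Z ∈ 𝒱, Z.1 ⊆ (X.1 ∪ Y.1).erase e ∧ Z.2 ⊆ (X.2 ∪ Y.2).erase e

/-- The restriction of a family of signed sets to `A`, that is, the deletion of the complement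
of `A`. -/
def restrictTo (𝒱 : Set (Finset α × Finset α)) (A : Finset α) : Set (Finset α × Finset α) :=
  {X ∈ 𝒱 | X.1 ∪ X.2 ⊆ A}

/-- The contraction of a family of signed sets by `e`: unlike for the circuits of a contraction,
the members whose support becomes non-minimal are kept. -/
def contractBy (𝒱 : Set (Finset α × Finset α)) (e : α) : Set (Finset α × Finset α) :=
  (fun X => (X.1.erase e, X.2.erase e)) '' 𝒱

/-- A tope of a family of signed sets, encoded as the set `t` of positive coordinates of a sign
vector without zeros: no member of the family is contained in it as a signed set. For the circuits
of an oriented matroid these are the maximal covectors, and the zeros of the ideal of `P(𝒞)`. -/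
def IsTope (𝒱 : Set (Finset α × Finset α)) (t : Finset α) : Prop :=
  ∀ X ∈ 𝒱, ¬(X.1 ⊆ t ∧ Disjoint X.2 t)

theorem SignedElimination.restrictTo (h : SignedElimination 𝒱) (A : Finset α) :
    SignedElimination (restrictTo 𝒱 A) := by
  rintro X ⟨hX, hXA⟩ Y ⟨hY, hYA⟩ hXY e he
  obtain ⟨Z, hZ, hpos, hneg⟩ := h X hX Y hY hXY e he
  exact ⟨Z, ⟨hZ, by grind⟩, hpos, hneg⟩

theorem SignedElimination.contractBy (h : SignedElimination 𝒱) (e : α) :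
    SignedElimination (contractBy 𝒱 e) := by
  rintro _ ⟨X, hX, rfl⟩ _ ⟨Y, hY, rfl⟩ hXY f hf
  obtain ⟨Z, hZ, hpos, hneg⟩ :=
    h X hX Y hY (by rintro rfl; exact hXY rfl) f (by grind)
  exact ⟨_, ⟨Z, hZ, rfl⟩, by grind, by grind⟩

theorem union_subset_of_mem_contractBy (hA : ∀ X ∈ 𝒱, X.1 ∪ X.2 ⊆ insert e A) :
    ∀ X ∈ contractBy 𝒱 e, X.1 ∪ X.2 ⊆ A := by
  rintro _ ⟨X, hX, rfl⟩
  rw [← Finset.erase_union_distrib, ← Finset.subset_insert_iff]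
  exact hA X hX

theorem union_nonempty_of_mem_contractBy (hne : ∀ X ∈ 𝒱, (X.1 ∪ X.2).Nonempty)
    (hloop : ∀ X ∈ 𝒱, X.1 ∪ X.2 ≠ {e}) : ∀ X ∈ contractBy 𝒱 e, (X.1 ∪ X.2).Nonempty := by
  rintro _ ⟨X, hX, rfl⟩
  rw [← Finset.erase_union_distrib, Finset.nonempty_iff_ne_empty, Ne, Finset.erase_eq_empty_iff]
  exact not_or.2 ⟨(hne X hX).ne_empty, hloop X hX⟩

theorem IsTope.of_contractBy (ht : IsTope (contractBy 𝒱 e) t) : IsTope 𝒱 t :=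
  fun X hX h => ht _ ⟨X, hX, rfl⟩
    ⟨(Finset.erase_subset _ _).trans h.1, h.2.mono_left (Finset.erase_subset _ _)⟩

theorem IsTope.insert_of_contractBy (ht : IsTope (contractBy 𝒱 e) t) : IsTope 𝒱 (insert e t) :=
  fun X hX h => ht _ ⟨X, hX, rfl⟩ ⟨Finset.subset_insert_iff.1 h.1,
    h.2.mono (Finset.erase_subset _ _) (Finset.subset_insert _ _)⟩

theorem IsTope.or_insert_of_restrictTo (hel : SignedElimination 𝒱)
    (hA : ∀ X ∈ 𝒱, X.1 ∪ X.2 ⊆ insert e A) (hloop : ∀ X ∈ 𝒱, X.1 ∪ X.2 ≠ {e})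
    (het : e ∉ t) (ht : IsTope (restrictTo 𝒱 A) t) : IsTope 𝒱 t ∨ IsTope 𝒱 (insert e t) := by
  have mem_of_conforms : ∀ X ∈ 𝒱, X.1 ⊆ insert e t → Disjoint X.2 t → e ∈ X.1 ∪ X.2 := by
    intro X hX hpos hneg
    by_contra he
    exact ht X ⟨hX, (Finset.subset_insert_iff_of_notMem he).1 (hA X hX)⟩ ⟨by grind, hneg⟩
  by_contra! hnot
  simp only [IsTope, not_forall, not_not] at hnot
  obtain ⟨⟨Y, hY, hYpos, hYneg⟩, X, hX, hXpos, hXneg⟩ := hnot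
  obtain ⟨heX2, hXneg⟩ := Finset.disjoint_insert_right.1 hXneg
  have heX : e ∈ X.1 := by
    simpa [heX2] using mem_of_conforms X hX hXpos hXneg
  have heY : e ∈ Y.2 := by
    have heY1 : e ∉ Y.1 := fun h => het (hYpos h)
    simpa [heY1] using mem_of_conforms Y hY (hYpos.trans (Finset.subset_insert e t)) hYneg
  rw [Finset.disjoint_left] at hXneg hYneg
  have hXY : X ≠ Y.swap := by
    rintro rfl
    refine hloop _ hX ?_
    ext a
    grind [Prod.fst_swap, Prod.snd_swap]
  obtain ⟨Z, hZ, hZpos, hZneg⟩ := hel X hX Y hY hXY e (Finset.mem_inter.2 ⟨heX, heY⟩)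
  have heZ : e ∉ Z.1 ∪ Z.2 := by grind
  refine heZ (mem_of_conforms Z hZ (by grind) (Finset.disjoint_left.2 ?_))
  grind

end SignedFamilies

section NBC

variable {α : Type*} [LinearOrder α] {𝒱 : Set (Finset α × Finset α)} {S : Finset α} {e : α}

/-- A set is NBC (no broken circuit) for a family of signed sets if it does not contain the
support of a member of the family with its least element removed. -/
def IsNBC (𝒱 : Set (Finset α × Finset α)) (S : Finset α) : Prop :=
  ∀ X ∈ 𝒱, ∀ m, IsLeast (↑(X.1 ∪ X.2) : Set α) m → ¬(X.1 ∪ X.2).erase m ⊆ S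

theorem IsNBC.union_ne_singleton (hS : IsNBC 𝒱 S) : ∀ X ∈ 𝒱, X.1 ∪ X.2 ≠ {e} := by
  intro X hX hXe
  exact hS X hX e (by simp [hXe]) (by simp [hXe])

theorem IsNBC.restrictTo (hS : IsNBC 𝒱 S) (A : Finset α) : IsNBC (restrictTo 𝒱 A) S :=
  fun X hX => hS X hX.1

theorem IsNBC.contractBy (he : ∀ X ∈ 𝒱, ∀ a ∈ X.1 ∪ X.2, a ≤ e)
    (hS : IsNBC 𝒱 (insert e S)) : IsNBC (contractBy 𝒱 e) S := by
  rintro _ ⟨X, hX, rfl⟩ m hm hsub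
  simp only [← Finset.erase_union_distrib] at hm hsub
  have hmX : m ∈ X.1 ∪ X.2 := Finset.mem_of_mem_erase hm.1
  refine hS X hX m ⟨hmX, fun b hb => ?_⟩ ?_
  · obtain rfl | hbe := eq_or_ne b e
    · exact he X hX m hmX
    · exact hm.2 (Finset.mem_erase.2 ⟨hbe, hb⟩)
  · rw [Finset.subset_insert_iff, Finset.erase_right_comm]
    exact hsub

/-- The sum over the subsets of `t` is the value of `∑ c S ∏_{a ∈ S} x_a` at the indicator of `t`,
so this is the linear independence of the NBC monomials as functions on the topes. -/
theorem eq_zero_of_sum_powerset_isTope {M : Type*} [AddCommMonoid M] (A : Finset α) :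
    ∀ (𝒱 : Set (Finset α × Finset α)), (∀ X ∈ 𝒱, X.1 ∪ X.2 ⊆ A) →
    (∀ X ∈ 𝒱, (X.1 ∪ X.2).Nonempty) → SignedElimination 𝒱 →
    ∀ c : Finset α → M, (∀ S, c S ≠ 0 → IsNBC 𝒱 S) →
    (∀ t ⊆ A, IsTope 𝒱 t → ∑ S ∈ t.powerset, c S = 0) → ∀ S ⊆ A, c S = 0 := by
  induction A using Finset.induction_on_max with
  | empty =>
    intro 𝒱 hA hne _ c _ hsum S hS
    have htope : IsTope 𝒱 ∅ := fun X hX => by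
      simpa [Finset.subset_empty.1 (hA X hX)] using hne X hX
    simpa [Finset.subset_empty.1 hS] using hsum ∅ subset_rfl htope
  | insert e A he ih =>
    intro 𝒱 hA hne hel c hc hsum T hT
    have heA : e ∉ A := fun h => lt_irrefl e (he e h)
    by_contra hcT
    have hloop : ∀ X ∈ 𝒱, X.1 ∪ X.2 ≠ {e} := (hc T hcT).union_ne_singleton
    have hmax : ∀ X ∈ 𝒱, ∀ a ∈ X.1 ∪ X.2, a ≤ e := fun X hX a ha =>
      (Finset.mem_insert.1 (hA X hX ha)).elim le_of_eq fun h => (he a h).le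
    have hinsert : ∀ S ⊆ A, c (insert e S) = 0 := by
      refine ih (contractBy 𝒱 e) (union_subset_of_mem_contractBy hA)
        (union_nonempty_of_mem_contractBy hne hloop) (hel.contractBy e) (fun S => c (insert e S))
        (fun S hS => (hc _ hS).contractBy hmax) fun t htA ht => ?_
      have hsum_insert := hsum _ (Finset.insert_subset_insert e htA) ht.insert_of_contractBy
      rwa [Finset.sum_powerset_insert (fun h => heA (htA h)),
        hsum t (htA.trans (Finset.subset_insert e A)) ht.of_contractBy, zero_add] at hsum_insert
    have hnotMem : ∀ S ⊆ A, c S = 0 := by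
      refine ih (restrictTo 𝒱 A) (fun X hX => hX.2) (fun X hX => hne X hX.1) (hel.restrictTo A) c
        (fun S hS => (hc S hS).restrictTo A) fun t htA ht => ?_
      have het : e ∉ t := fun h => heA (htA h)
      obtain ht | ht := ht.or_insert_of_restrictTo hel hA hloop het
      · exact hsum t (htA.trans (Finset.subset_insert e A)) ht
      · have hsum_insert := hsum _ (Finset.insert_subset_insert e htA) ht
        rwa [Finset.sum_powerset_insert het, Finset.sum_eq_zero (s := t.powerset)
          (f := fun S => c (insert e S)) fun S hS =>
            hinsert S ((Finset.mem_powerset.1 hS).trans htA), add_zero] at hsum_insert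
    by_cases heT : e ∈ T
    · rw [← Finset.insert_erase heT] at hcT
      exact hcT (hinsert _ (Finset.subset_insert_iff.1 hT))
    · exact hcT (hnotMem T ((Finset.subset_insert_iff_of_notMem heT).1 hT))

end NBC

section Degree

open scoped Pointwise

variable {σ R : Type*} {k l m : ℕ}

section CommSemiring

variable [CommSemiring R] {p q : MvPolynomial σ R}

variable (σ R) in
/-- The polynomials all of whose monomials have degree less than `k`. With `k = 0` this is the
zero space, as the convention `P⁻¹ = 0` requires. -/
noncomputable def totalDegreeLT (k : ℕ) : Submodule R (MvPolynomial σ R) :=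
  restrictSupport R {d | d.degree < k}

theorem mem_totalDegreeLT : p ∈ totalDegreeLT σ R k ↔ ∀ d ∈ p.support, d.degree < k := by
  rw [totalDegreeLT, mem_restrictSupport_iff]
  rfl

theorem totalDegreeLT_zero : totalDegreeLT σ R 0 = ⊥ := by
  refine (Submodule.eq_bot_iff _).2 fun p hp => support_eq_empty.1 ?_
  exact Finset.eq_empty_of_forall_notMem fun d hd => absurd (mem_totalDegreeLT.1 hp d hd) (by simp)

theorem totalDegreeLT_succ (k : ℕ) : totalDegreeLT σ R (k + 1) = restrictTotalDegree σ R k := by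
  simp only [totalDegreeLT, restrictTotalDegree, Nat.lt_succ_iff]
  rfl

theorem totalDegreeLT_mono : Monotone (totalDegreeLT σ R) :=
  fun _ _ hkl => restrictSupport_mono R fun _ hd => lt_of_lt_of_le hd hkl

theorem mul_mem_totalDegreeLT (hm : k + l ≤ m + 1) (hp : p ∈ totalDegreeLT σ R k)
    (hq : q ∈ totalDegreeLT σ R l) : p * q ∈ totalDegreeLT σ R m := by
  have hpq : p * q ∈ restrictSupport R
      ({d : σ →₀ ℕ | d.degree < k} + {d : σ →₀ ℕ | d.degree < l}) := by
    rw [restrictSupport_add]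
    exact Submodule.mul_mem_mul hp hq
  refine restrictSupport_mono R ?_ hpq
  rintro _ ⟨x, hx, y, hy, rfl⟩
  simp only [Set.mem_ofPred_eq, map_add] at *
  omega

theorem homogeneousSubmodule_le_totalDegreeLT (h : k < l) :
    homogeneousSubmodule σ R k ≤ totalDegreeLT σ R l := by
  refine fun p hp => mem_totalDegreeLT.2 fun d hd => ?_
  by_contra hdl
  exact mem_support_iff.1 hd (IsHomogeneous.coeff_eq_zero hp (by omega))

theorem C_mem_totalDegreeLT_one (r : R) : C r ∈ totalDegreeLT σ R 1 :=
  homogeneousSubmodule_le_totalDegreeLT Nat.zero_lt_one (isHomogeneous_C σ r)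

theorem homogeneousComponent_eq_zero_of_mem_totalDegreeLT (hp : p ∈ totalDegreeLT σ R k) :
    homogeneousComponent k p = 0 :=
  homogeneousComponent_eq_zero' _ _ fun d hd => (mem_totalDegreeLT.1 hp d hd).ne

theorem homogeneousComponent_mul_of_isHomogeneous (hp : p.IsHomogeneous l) (q : MvPolynomial σ R)
    (k : ℕ) : homogeneousComponent k (p * q) =
      if l ≤ k then p * homogeneousComponent (k - l) q else 0 := by
  let := gradedAlgebra (σ := σ) (R := R)
  simp only [← decomposition.decompose'_apply]
  exact DirectSum.coe_decompose_mul_of_left_mem (homogeneousSubmodule σ R) k hp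

end CommSemiring

section CommRing

variable [CommRing R] {p q : MvPolynomial σ R}

theorem sub_homogeneousComponent_mem_totalDegreeLT (hp : p ∈ totalDegreeLT σ R (k + 1)) :
    p - homogeneousComponent k p ∈ totalDegreeLT σ R k := by
  refine mem_totalDegreeLT.2 fun d hd => ?_
  rw [mem_support_iff, coeff_sub, coeff_homogeneousComponent] at hd
  split_ifs at hd with hdk
  · exact absurd (sub_self _) hd
  · have := mem_totalDegreeLT.1 hp d (mem_support_iff.2 (by simpa using hd))
    omega

theorem homogeneousComponent_add_mul (hp : p ∈ totalDegreeLT σ R (k + 1))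
    (hq : q ∈ totalDegreeLT σ R (l + 1)) : homogeneousComponent (k + l) (p * q) =
      homogeneousComponent k p * homogeneousComponent l q := by
  have hp_hom := homogeneousComponent_isHomogeneous k p
  have hlow : (p - homogeneousComponent k p) * q ∈ totalDegreeLT σ R (k + l) :=
    mul_mem_totalDegreeLT (by omega) (sub_homogeneousComponent_mem_totalDegreeLT hp) hq
  calc homogeneousComponent (k + l) (p * q)
      = homogeneousComponent (k + l) ((p - homogeneousComponent k p) * q) +
        homogeneousComponent (k + l) (homogeneousComponent k p * q) := by
        rw [← map_add]; congr 1; ring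
    _ = homogeneousComponent k p * homogeneousComponent l q := by
        rw [homogeneousComponent_eq_zero_of_mem_totalDegreeLT hlow, zero_add,
          homogeneousComponent_mul_of_isHomogeneous hp_hom, if_pos (Nat.le_add_right k l),
          Nat.add_sub_cancel_left]

end CommRing

end Degree

section InitialIdeal

variable {σ R : Type*} [CommRing R] {I J : Ideal (MvPolynomial σ R)} {k l : ℕ}
  {p q : MvPolynomial σ R}

/-- The polynomials congruent modulo `I` to one of degree less than `k`, that is, the preimage
of the step `k - 1` of the degree filtration of the quotient by `I`. -/
noncomputable def totalDegreeLTMod (I : Ideal (MvPolynomial σ R)) (k : ℕ) :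
    Submodule R (MvPolynomial σ R) :=
  totalDegreeLT σ R k ⊔ I.restrictScalars R

theorem mem_totalDegreeLTMod_of_mem (hp : p ∈ I) : p ∈ totalDegreeLTMod I k :=
  Submodule.mem_sup_right hp

theorem totalDegreeLT_le_totalDegreeLTMod : totalDegreeLT σ R k ≤ totalDegreeLTMod I k :=
  le_sup_left

theorem mul_mem_totalDegreeLTMod (hp : p.IsHomogeneous l) (hq : q ∈ totalDegreeLTMod I k) :
    p * q ∈ totalDegreeLTMod I (l + k) := by
  obtain ⟨r, hr, i, hi, rfl⟩ := Submodule.mem_sup.1 hq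
  rw [mul_add]
  exact add_mem (totalDegreeLT_le_totalDegreeLTMod <| mul_mem_totalDegreeLT (by omega)
    (homogeneousSubmodule_le_totalDegreeLT l.lt_succ_self hp) hr)
    (mem_totalDegreeLTMod_of_mem (I.mul_mem_left p hi))

theorem mkₐ_mem_map_totalDegreeLT_iff :
    Ideal.Quotient.mkₐ R I p ∈ (totalDegreeLT σ R k).map (Ideal.Quotient.mkₐ R I).toLinearMap ↔
      p ∈ totalDegreeLTMod I k := by
  have hker : LinearMap.ker (Ideal.Quotient.mkₐ R I).toLinearMap = I.restrictScalars R :=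
    congrArg (Submodule.restrictScalars R) (Ideal.Quotient.mkₐ_ker R I)
  rw [totalDegreeLTMod, ← hker, ← Submodule.comap_map_eq]
  rfl

/-- The ideal of leading forms of `I` for the total degree: the homogeneous ideal whose degree `k`
part consists of the forms of degree `k` congruent modulo `I` to polynomials of lower degree. -/
noncomputable def initialIdeal (I : Ideal (MvPolynomial σ R)) : Ideal (MvPolynomial σ R) where
  carrier := {p | ∀ k, homogeneousComponent k p ∈ totalDegreeLTMod I k}
  zero_mem' k := by simp only [map_zero, zero_mem]
  add_mem' hp hq k := by simpa only [map_add] using add_mem (hp k) (hq k)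
  smul_mem' a p hp k := by
    rw [smul_eq_mul, ← sum_homogeneousComponent a, Finset.sum_mul, map_sum]
    refine sum_mem fun i _ => ?_
    have ha := homogeneousComponent_isHomogeneous i a
    rw [homogeneousComponent_mul_of_isHomogeneous ha]
    split_ifs with hik
    · simpa only [Nat.add_sub_cancel' hik] using mul_mem_totalDegreeLTMod ha (hp (k - i))
    · exact zero_mem _

theorem mem_initialIdeal_iff_of_isHomogeneous (hp : p.IsHomogeneous k) :
    p ∈ initialIdeal I ↔ p ∈ totalDegreeLTMod I k := by
  refine ⟨fun h => ?_, fun h l => ?_⟩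
  · simpa only [homogeneousComponent_eq_self hp] using h k
  · rw [homogeneousComponent_of_mem hp]
    split_ifs with hlk
    · rwa [hlk]
    · exact zero_mem _

theorem homogeneousComponent_mem_initialIdeal_iff (hp : p ∈ totalDegreeLT σ R (k + 1)) :
    homogeneousComponent k p ∈ initialIdeal I ↔ p ∈ totalDegreeLTMod I k := by
  rw [mem_initialIdeal_iff_of_isHomogeneous (homogeneousComponent_isHomogeneous k p)]
  have hlow : p - homogeneousComponent k p ∈ totalDegreeLTMod I k :=
    totalDegreeLT_le_totalDegreeLTMod (sub_homogeneousComponent_mem_totalDegreeLT hp)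
  conv_rhs => rw [← sub_add_cancel p (homogeneousComponent k p)]
  exact (Submodule.add_mem_iff_right _ hlow).symm

theorem initialIdeal_le_iff : initialIdeal I ≤ J ↔
    ∀ k p, p.IsHomogeneous k → p ∈ totalDegreeLTMod I k → p ∈ J := by
  refine ⟨fun h k p hp hpI => h ((mem_initialIdeal_iff_of_isHomogeneous hp).2 hpI),
    fun h p hp => ?_⟩
  rw [← sum_homogeneousComponent p]
  exact sum_mem fun k _ => h k _ (homogeneousComponent_isHomogeneous k p) (hp k)

/-- Forms reduce to normal forms modulo `J`, hence modulo `I` up to terms of lower degree. -/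
theorem totalDegreeLT_le_inf_sup {N : Submodule R (MvPolynomial σ R)} (hJ : J ≤ initialIdeal I)
    (hN : ∀ k, homogeneousSubmodule σ R k ≤
      N ⊓ homogeneousSubmodule σ R k ⊔ J.restrictScalars R) (k : ℕ) :
    totalDegreeLT σ R k ≤ N ⊓ totalDegreeLT σ R k ⊔ I.restrictScalars R := by
  induction k with
  | zero => simp only [totalDegreeLT_zero, bot_le]
  | succ k ih =>
    intro p hp
    have hp_hom := homogeneousComponent_isHomogeneous k p
    obtain ⟨n, ⟨hnN, hn_hom⟩, j, hj, hnj⟩ := Submodule.mem_sup.1 (hN k hp_hom)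
    have hj_hom : j.IsHomogeneous k := by
      rw [eq_sub_iff_add_eq'.2 hnj]
      exact hp_hom.sub hn_hom
    have hj_mod : j ∈ totalDegreeLTMod I k :=
      (mem_initialIdeal_iff_of_isHomogeneous hj_hom).1 (hJ hj)
    have hle : totalDegreeLTMod I k ≤ N ⊓ totalDegreeLT σ R (k + 1) ⊔ I.restrictScalars R :=
      sup_le (ih.trans (sup_le_sup_right (inf_le_inf_left N (totalDegreeLT_mono k.le_succ)) _))
        le_sup_right
    rw [← sub_add_cancel p (homogeneousComponent k p), ← hnj]
    have hlow : p - (n + j) ∈ totalDegreeLTMod I k := totalDegreeLT_le_totalDegreeLTMod <|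
      hnj ▸ sub_homogeneousComponent_mem_totalDegreeLT hp
    exact add_mem (hle hlow) (add_mem (Submodule.mem_sup_left
        ⟨hnN, homogeneousSubmodule_le_totalDegreeLT k.lt_succ_self hn_hom⟩) (hle hj_mod))

theorem initialIdeal_eq_of_disjoint {N : Submodule R (MvPolynomial σ R)}
    (hJ : J ≤ initialIdeal I)
    (hN : ∀ k, homogeneousSubmodule σ R k ≤
      N ⊓ homogeneousSubmodule σ R k ⊔ J.restrictScalars R)
    (hNI : Disjoint N (I.restrictScalars R)) : initialIdeal I = J := by
  refine le_antisymm (initialIdeal_le_iff.2 fun k p hp hpI => ?_) hJ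
  obtain ⟨n, ⟨hnN, hn_hom⟩, j, hj, rfl⟩ := Submodule.mem_sup.1 (hN k hp)
  have hj_hom : j.IsHomogeneous k := by
    simpa only [add_sub_cancel_left] using hp.sub hn_hom
  have hn_mod : n ∈ totalDegreeLTMod I k := (Submodule.add_mem_iff_left _
    ((mem_initialIdeal_iff_of_isHomogeneous hj_hom).1 (hJ hj))).1 hpI
  obtain ⟨n', ⟨hn'N, hn'_lt⟩, i, hi, hn'i⟩ := Submodule.mem_sup.1 <|
    (sup_le (totalDegreeLT_le_inf_sup hJ hN k) le_sup_right :
      totalDegreeLTMod I k ≤ _) hn_mod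
  have hi_zero : i = 0 := by
    refine Submodule.disjoint_def.1 hNI i ?_ hi
    rw [eq_sub_iff_add_eq'.2 hn'i]
    exact sub_mem hnN hn'N
  have hn_zero : n = 0 := by
    rw [← homogeneousComponent_eq_self hn_hom, ← hn'i, hi_zero, add_zero]
    exact homogeneousComponent_eq_zero_of_mem_totalDegreeLT hn'_lt
  rwa [hn_zero, zero_add]

end InitialIdeal

section SquarefreeMonomials

variable {σ R : Type*}

section CommSemiring

variable [CommSemiring R]

variable (R) in
/-- The squarefree monomial `∏_{a ∈ S} x_a`. -/
noncomputable def sqfMonomial (S : Finset σ) : MvPolynomial σ R :=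
  ∏ a ∈ S, X a

theorem isHomogeneous_sqfMonomial (S : Finset σ) : (sqfMonomial R S).IsHomogeneous S.card := by
  rw [Finset.card_eq_sum_ones]
  exact IsHomogeneous.prod S _ _ fun a _ => isHomogeneous_X R a

theorem sqfMonomial_mem_totalDegreeLT {S : Finset σ} {k : ℕ} (h : S.card < k) :
    sqfMonomial R S ∈ totalDegreeLT σ R k :=
  homogeneousSubmodule_le_totalDegreeLT h (isHomogeneous_sqfMonomial S)

variable [DecidableEq σ]

theorem sqfMonomial_insert {S : Finset σ} {a : σ} (ha : a ∉ S) :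
    sqfMonomial R (insert a S) = X a * sqfMonomial R S :=
  Finset.prod_insert ha

theorem X_mul_sqfMonomial_erase {S : Finset σ} {a : σ} (ha : a ∈ S) :
    X a * sqfMonomial R (S.erase a) = sqfMonomial R S :=
  Finset.mul_prod_erase S X ha

end CommSemiring

variable [CommRing R] [DecidableEq σ]

theorem prod_X_sub_C_sub_add_mem_totalDegreeLT (ε : σ → R) (S : Finset σ) :
    ∏ a ∈ S, (X a - C (ε a)) - sqfMonomial R S + ∑ a ∈ S, C (ε a) * sqfMonomial R (S.erase a) ∈
      totalDegreeLT σ R (S.card - 1) := by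
  induction S using Finset.induction_on with
  | empty => simp [sqfMonomial]
  | insert b S hb ih =>
    obtain rfl | hS := S.eq_empty_or_nonempty
    · simp [sqfMonomial]
    have hS_pos := hS.card_pos
    have hsum : ∑ a ∈ S, C (ε a) * sqfMonomial R ((insert b S).erase a) =
        X b * ∑ a ∈ S, C (ε a) * sqfMonomial R (S.erase a) := by
      rw [Finset.mul_sum]
      refine Finset.sum_congr rfl fun a ha => ?_
      rw [Finset.erase_insert_of_ne (by rintro rfl; exact hb ha),
        sqfMonomial_insert fun h => hb (Finset.mem_of_mem_erase h)]
      ring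
    have hlinear : X b - C (ε b) ∈ totalDegreeLT σ R 2 :=
      sub_mem (homogeneousSubmodule_le_totalDegreeLT one_lt_two (isHomogeneous_X R b))
        (totalDegreeLT_mono one_le_two (C_mem_totalDegreeLT_one _))
    have hlower : ∑ a ∈ S, C (ε a) * sqfMonomial R (S.erase a) ∈ totalDegreeLT σ R S.card :=
      sum_mem fun a ha => mul_mem_totalDegreeLT (by omega) (C_mem_totalDegreeLT_one _)
        (sqfMonomial_mem_totalDegreeLT (Finset.card_erase_lt_of_mem ha))
    rw [Finset.prod_insert hb, Finset.sum_insert hb, Finset.erase_insert hb,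
      Finset.card_insert_of_notMem hb, Nat.add_sub_cancel, hsum, sqfMonomial_insert hb]
    convert add_mem (mul_mem_totalDegreeLT (m := S.card) (by omega) hlinear ih)
      (mul_mem_totalDegreeLT (by omega) (C_mem_totalDegreeLT_one (ε b)) hlower) using 1
    ring

end SquarefreeMonomials

section LeadingForms

variable {α : Type*} {𝒞 : Set (Finset α × Finset α)} {Y : Finset α × Finset α}

theorem X_sq_mem_initialIdeal_pIdeal (a : α) : X a ^ 2 ∈ initialIdeal (pIdeal 𝒞) := by
  have hgen : X a ^ 2 - X a ∈ pIdeal 𝒞 := Ideal.subset_span (Or.inl ⟨a, rfl⟩)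
  rw [mem_initialIdeal_iff_of_isHomogeneous (isHomogeneous_X_pow a 2),
    ← sub_add_cancel (X a ^ 2) (X a)]
  exact add_mem (mem_totalDegreeLTMod_of_mem hgen) (totalDegreeLT_le_totalDegreeLTMod
    (homogeneousSubmodule_le_totalDegreeLT one_lt_two (isHomogeneous_X ℚ a)))

variable [LinearOrder α]

theorem prod_X_sub_indicator_mem_pIdeal (hY : Y ∈ 𝒞) (hdisj : Disjoint Y.1 Y.2) :
    ∏ a ∈ Y.1 ∪ Y.2, (X a - C (if a ∈ Y.2 then 1 else 0)) ∈ pIdeal 𝒞 := by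
  have hprod : ∏ a ∈ Y.1 ∪ Y.2, (X a - C (if a ∈ Y.2 then (1 : ℚ) else 0)) =
      (-1) ^ Y.2.card * ((∏ a ∈ Y.1, X a) * ∏ a ∈ Y.2, (1 - X a)) := by
    rw [Finset.prod_union hdisj, mul_left_comm, ← Finset.prod_const, ← Finset.prod_mul_distrib]
    congr 1
    · exact Finset.prod_congr rfl fun a ha => by simp [Finset.disjoint_left.1 hdisj ha]
    · exact Finset.prod_congr rfl fun a ha => by simp [ha]
  rw [hprod]
  exact Ideal.mul_mem_left _ _ (Ideal.subset_span (Or.inr ⟨Y, hY, rfl⟩))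

theorem tpartial_eq_sum_sqfMonomial (Y : Finset α × Finset α) : tpartial Y =
    ∑ a ∈ Y.1 ∪ Y.2, C (if a ∈ Y.1 then 1 else -1) * sqfMonomial ℚ ((Y.1 ∪ Y.2).erase a) :=
  Finset.sum_congr rfl fun a _ => by split_ifs <;> simp [sqfMonomial]

theorem isHomogeneous_tpartial (Y : Finset α × Finset α) :
    (tpartial Y).IsHomogeneous ((Y.1 ∪ Y.2).card - 1) := by
  rw [tpartial_eq_sum_sqfMonomial]
  refine IsHomogeneous.sum _ _ _ fun a ha => ?_
  rw [← Finset.card_erase_of_mem ha]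
  exact (isHomogeneous_sqfMonomial _).C_mul _

/-- The polynomials of `Y` and `-Y` agree up to sign in top degree, and `∂̃(Y)` is the leading form
of what remains when the top degree cancels. -/
theorem tpartial_mem_initialIdeal_pIdeal (hY : Y ∈ 𝒞) (hswap : Y.swap ∈ 𝒞)
    (hdisj : Disjoint Y.1 Y.2) : tpartial Y ∈ initialIdeal (pIdeal 𝒞) := by
  have hpos := prod_X_sub_indicator_mem_pIdeal hY hdisj
  have hneg := prod_X_sub_indicator_mem_pIdeal hswap hdisj.symm
  simp only [Prod.fst_swap, Prod.snd_swap, Finset.union_comm Y.2 Y.1] at hneg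
  have hlow := sub_mem
    (prod_X_sub_C_sub_add_mem_totalDegreeLT (fun a => if a ∈ Y.1 then (1 : ℚ) else 0) (Y.1 ∪ Y.2))
    (prod_X_sub_C_sub_add_mem_totalDegreeLT (fun a => if a ∈ Y.2 then (1 : ℚ) else 0) (Y.1 ∪ Y.2))
  have hsign : tpartial Y =
      ∑ a ∈ Y.1 ∪ Y.2, C (if a ∈ Y.1 then 1 else 0) * sqfMonomial ℚ ((Y.1 ∪ Y.2).erase a) -
      ∑ a ∈ Y.1 ∪ Y.2, C (if a ∈ Y.2 then 1 else 0) * sqfMonomial ℚ ((Y.1 ∪ Y.2).erase a) := by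
    rw [tpartial_eq_sum_sqfMonomial, ← Finset.sum_sub_distrib]
    refine Finset.sum_congr rfl fun a ha => ?_
    rw [← sub_mul, ← C_sub]
    congr 2
    grind [Finset.disjoint_left.1 hdisj]
  rw [mem_initialIdeal_iff_of_isHomogeneous (isHomogeneous_tpartial Y), hsign]
  convert sub_mem (totalDegreeLT_le_totalDegreeLTMod hlow)
    (mem_totalDegreeLTMod_of_mem (sub_mem hneg hpos)) using 1
  ring

theorem aIdeal_le_initialIdeal_pIdeal (hdisj : ∀ X ∈ 𝒞, Disjoint X.1 X.2)
    (hswap : ∀ X ∈ 𝒞, X.swap ∈ 𝒞) : aIdeal 𝒞 ≤ initialIdeal (pIdeal 𝒞) := by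
  refine Ideal.span_le.2 ?_
  rintro _ (⟨a, rfl⟩ | ⟨Y, hY, -, rfl⟩)
  · exact X_sq_mem_initialIdeal_pIdeal a
  · exact tpartial_mem_initialIdeal_pIdeal hY (hswap Y hY) (hdisj Y hY)

end LeadingForms

section Straightening

variable {α : Type*} [LinearOrder α] {𝒞 : Set (Finset α × Finset α)} {Y : Finset α × Finset α}
  {A S : Finset α} {a m : α} {k : ℕ}

/-- The span of the NBC monomials of `𝒞`. -/
noncomputable def nbcSpan (𝒞 : Set (Finset α × Finset α)) : Submodule ℚ (MvPolynomial α ℚ) :=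
  Submodule.span ℚ (sqfMonomial ℚ '' {S | IsNBC 𝒞 S})

theorem mem_aIdeal_of_X_sq_dvd {p : MvPolynomial α ℚ} (h : X a ^ 2 ∣ p) : p ∈ aIdeal 𝒞 :=
  Ideal.mem_of_dvd _ h (Ideal.subset_span (Or.inl ⟨a, rfl⟩))

theorem tpartial_mem_aIdeal (hY : Y ∈ 𝒞) (hmY : m ∈ Y.1)
    (hm : IsLeast (↑(Y.1 ∪ Y.2) : Set α) m) : tpartial Y ∈ aIdeal 𝒞 := by
  have hmin : (Y.1 ∪ Y.2).min' ⟨m, hm.1⟩ = m :=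
    (Finset.isLeast_min' _ _).unique hm
  exact Ideal.subset_span (Or.inr ⟨Y, hY, ⟨⟨m, hm.1⟩, hmin.symm ▸ hmY⟩, rfl⟩)

theorem exists_isLeast_of_not_isNBC (hswap : ∀ X ∈ 𝒞, X.swap ∈ 𝒞) (hS : ¬IsNBC 𝒞 S) :
    ∃ Y ∈ 𝒞, ∃ m ∈ Y.1, IsLeast (↑(Y.1 ∪ Y.2) : Set α) m ∧ (Y.1 ∪ Y.2).erase m ⊆ S := by
  simp only [IsNBC, not_forall, not_not] at hS
  obtain ⟨Y, hY, m, hm, hsub⟩ := hS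
  obtain hmY | hmY := Finset.mem_union.1 hm.1
  · exact ⟨Y, hY, m, hmY, hm, hsub⟩
  · rw [Finset.union_comm] at hm hsub
    exact ⟨Y.swap, hswap Y hY, m, hmY, hm, hsub⟩

theorem sqfMonomial_mul_tpartial (hmY : m ∈ Y.1) (hsub : (Y.1 ∪ Y.2).erase m ⊆ S) :
    sqfMonomial ℚ (S \ (Y.1 ∪ Y.2).erase m) * tpartial Y = sqfMonomial ℚ S +
      ∑ a ∈ (Y.1 ∪ Y.2).erase m,
        C (if a ∈ Y.1 then 1 else -1) * (X m * sqfMonomial ℚ (S.erase a)) := by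
  have hmU : m ∈ Y.1 ∪ Y.2 := Finset.mem_union_left _ hmY
  rw [tpartial_eq_sum_sqfMonomial, ← Finset.add_sum_erase _ _ hmU, if_pos hmY, C_1, one_mul,
    mul_add, Finset.mul_sum]
  congr 1
  · exact Finset.prod_sdiff hsub
  · refine Finset.sum_congr rfl fun a ha => ?_
    have hma : m ∈ (Y.1 ∪ Y.2).erase a :=
      Finset.mem_erase.2 ⟨(Finset.ne_of_mem_erase ha).symm, hmU⟩
    have hsdiff : S \ (Y.1 ∪ Y.2).erase m = S.erase a \ ((Y.1 ∪ Y.2).erase m).erase a := by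
      grind
    rw [← X_mul_sqfMonomial_erase hma, Finset.erase_right_comm, hsdiff]
    have hprod := Finset.prod_sdiff (f := fun b => (X b : MvPolynomial α ℚ))
      (Finset.erase_subset_erase a hsub)
    simp only [sqfMonomial, ← hprod]
    ring

theorem sum_card_filter_lt_insert_erase (hmA : m ∈ A) (haS : a ∈ S) (hmS : m ∉ S) (hma : m < a) :
    ∑ b ∈ insert m (S.erase a), (A.filter (· < b)).card < ∑ b ∈ S, (A.filter (· < b)).card := by
  rw [Finset.sum_insert (fun h => hmS (Finset.mem_of_mem_erase h)), ← Finset.add_sum_erase _ _ haS]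
  refine Nat.add_lt_add_right (Finset.card_lt_card <| Finset.ssubset_iff_of_subset
    (fun b hb => ?_) |>.2 ⟨m, by simp [hmA, hma], by simp⟩) _
  simp only [Finset.mem_filter] at *
  exact ⟨hb.1, hb.2.trans hma⟩

/-- Straightening: the relation `∂̃` rewrites a broken circuit by replacing one of its elements with
the smaller missing one, so the sum of the ranks of the elements in `A` decreases. -/
theorem sqfMonomial_mem_nbcSpan_sup_aIdeal (hswap : ∀ X ∈ 𝒞, X.swap ∈ 𝒞)
    (hA : ∀ X ∈ 𝒞, X.1 ∪ X.2 ⊆ A) (S : Finset α) : sqfMonomial ℚ S ∈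
      nbcSpan 𝒞 ⊓ homogeneousSubmodule α ℚ S.card ⊔ (aIdeal 𝒞).restrictScalars ℚ := by
  induction hN : ∑ b ∈ S, (A.filter (· < b)).card using Nat.strong_induction_on generalizing S with
  | _ N ih =>
    by_cases hS : IsNBC 𝒞 S
    · exact Submodule.mem_sup_left
        ⟨Submodule.subset_span ⟨S, hS, rfl⟩, isHomogeneous_sqfMonomial S⟩
    obtain ⟨Y, hY, m, hmY, hm, hsub⟩ := exists_isLeast_of_not_isNBC hswap hS
    have hrel : sqfMonomial ℚ (S \ (Y.1 ∪ Y.2).erase m) * tpartial Y ∈ aIdeal 𝒞 :=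
      Ideal.mul_mem_left _ _ (tpartial_mem_aIdeal hY hmY hm)
    rw [eq_sub_of_add_eq (sqfMonomial_mul_tpartial hmY hsub).symm]
    refine sub_mem (Submodule.mem_sup_right hrel) (sum_mem fun a ha => ?_)
    rw [C_mul']
    refine Submodule.smul_mem _ _ ?_
    have haS : a ∈ S := hsub ha
    have hma : m < a := lt_of_le_of_ne (hm.2 (Finset.mem_of_mem_erase ha))
      (Finset.ne_of_mem_erase ha).symm
    by_cases hmS : m ∈ S
    · refine Submodule.mem_sup_right (mem_aIdeal_of_X_sq_dvd (a := m) ?_)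
      rw [pow_two]
      exact mul_dvd_mul_left _ (Finset.dvd_prod_of_mem X (Finset.mem_erase.2 ⟨hma.ne, hmS⟩))
    · have hmSa : m ∉ S.erase a := fun h => hmS (Finset.mem_of_mem_erase h)
      have hcard : (insert m (S.erase a)).card = S.card := by
        rw [Finset.card_insert_of_notMem hmSa, Finset.card_erase_add_one haS]
      rw [← sqfMonomial_insert hmSa, ← hcard]
      exact ih _ (hN ▸ sum_card_filter_lt_insert_erase (hA Y hY hm.1) haS hmS hma) _ rfl

theorem monomial_mem_aIdeal_or_eq_sqfMonomial (d : α →₀ ℕ) :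
    (monomial d 1 : MvPolynomial α ℚ) ∈ aIdeal 𝒞 ∨
      ∃ S : Finset α, S.card = d.degree ∧ monomial d 1 = sqfMonomial ℚ S := by
  have hprod : (monomial d 1 : MvPolynomial α ℚ) = ∏ a ∈ d.support, X a ^ d a := by
    rw [monomial_eq, C_1, one_mul, Finsupp.prod]
  by_cases hd : ∀ a ∈ d.support, d a = 1
  · refine Or.inr ⟨d.support, ?_, ?_⟩
    · rw [Finsupp.degree_apply, Finset.card_eq_sum_ones]
      exact Finset.sum_congr rfl fun a ha => (hd a ha).symm
    · rw [hprod]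
      exact Finset.prod_congr rfl fun a ha => by rw [hd a ha, pow_one]
  · push Not at hd
    obtain ⟨a, ha, hda⟩ := hd
    have hda0 := Finsupp.mem_support_iff.1 ha
    refine Or.inl (mem_aIdeal_of_X_sq_dvd (a := a) ?_)
    rw [hprod]
    exact (pow_dvd_pow _ (by omega)).trans (Finset.dvd_prod_of_mem _ ha)

theorem homogeneousSubmodule_le_nbcSpan_sup_aIdeal (hswap : ∀ X ∈ 𝒞, X.swap ∈ 𝒞)
    (hA : ∀ X ∈ 𝒞, X.1 ∪ X.2 ⊆ A) (k : ℕ) : homogeneousSubmodule α ℚ k ≤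
      nbcSpan 𝒞 ⊓ homogeneousSubmodule α ℚ k ⊔ (aIdeal 𝒞).restrictScalars ℚ := by
  intro p hp
  rw [p.as_sum]
  refine sum_mem fun d hd => ?_
  have hdk : d.degree = k := by
    by_contra h
    exact mem_support_iff.1 hd (IsHomogeneous.coeff_eq_zero hp h)
  rw [← mul_one (coeff d p), ← smul_eq_mul, ← smul_monomial]
  refine Submodule.smul_mem _ _ ?_
  obtain h | ⟨S, hS, h⟩ := monomial_mem_aIdeal_or_eq_sqfMonomial (𝒞 := 𝒞) d
  · exact Submodule.mem_sup_right h
  · rw [h, ← hdk, ← hS]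
    exact sqfMonomial_mem_nbcSpan_sup_aIdeal hswap hA S

end Straightening

section Independence

variable {α : Type*} {𝒞 : Set (Finset α × Finset α)} {A t : Finset α}
  {p : MvPolynomial α ℚ}

section

variable [DecidableEq α]

/-- Evaluation at the indicator function of `t`. -/
noncomputable def evalIndicator (t : Finset α) : MvPolynomial α ℚ →ₐ[ℚ] ℚ :=
  aeval fun a => if a ∈ t then 1 else 0

theorem evalIndicator_sqfMonomial (t S : Finset α) :
    evalIndicator t (sqfMonomial ℚ S) = if S ⊆ t then 1 else 0 := by
  simp only [evalIndicator, sqfMonomial, map_prod, aeval_X, Finset.prod_ite_zero,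
    Finset.prod_const_one, Finset.subset_iff]

theorem evalIndicator_linearCombination (t : Finset α) (c : Finset α →₀ ℚ) :
    evalIndicator t (Finsupp.linearCombination ℚ (sqfMonomial ℚ) c) = ∑ S ∈ t.powerset, c S := by
  induction c using Finsupp.induction_linear with
  | zero => simp only [map_zero, Finsupp.coe_zero, Pi.zero_apply, Finset.sum_const_zero]
  | add c d hc hd => simp only [map_add, hc, hd, Finsupp.add_apply, Finset.sum_add_distrib]
  | single S r =>
    simp [Finsupp.linearCombination_single, evalIndicator_sqfMonomial, Finsupp.single_apply]

theorem IsTope.evalIndicator_eq_zero (ht : IsTope 𝒞 t) (hp : p ∈ pIdeal 𝒞) :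
    evalIndicator t p = 0 := by
  suffices pIdeal 𝒞 ≤ RingHom.ker (evalIndicator t) from this hp
  refine Ideal.span_le.2 ?_
  rintro _ (⟨a, rfl⟩ | ⟨Y, hY, rfl⟩)
  · simp [evalIndicator]
  · by_contra hY_ne
    simp only [SetLike.mem_coe, RingHom.mem_ker, evalIndicator, map_mul, map_prod, map_sub, map_one,
      aeval_X, mul_eq_zero, Finset.prod_eq_zero_iff, not_or, not_exists, not_and] at hY_ne
    refine ht Y hY ⟨fun a ha => ?_, Finset.disjoint_left.2 fun a ha hat => ?_⟩
    · by_contra hat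
      exact hY_ne.1 a ha (if_neg hat)
    · exact hY_ne.2 a ha (by rw [if_pos hat, sub_self])

end

variable [LinearOrder α]

theorem disjoint_nbcSpan_pIdeal (hA : ∀ X ∈ 𝒞, X.1 ∪ X.2 ⊆ A)
    (hne : ∀ X ∈ 𝒞, (X.1 ∪ X.2).Nonempty) (helim : SignedElimination 𝒞) :
    Disjoint (nbcSpan 𝒞) ((pIdeal 𝒞).restrictScalars ℚ) := by
  refine Submodule.disjoint_def.2 fun p hpN hpI => ?_
  obtain ⟨c, hc, rfl⟩ := (Finsupp.mem_span_image_iff_linearCombination ℚ).1 hpN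
  have hc_zero : c = 0 := by
    ext S
    refine eq_zero_of_sum_powerset_isTope (A ∪ S) 𝒞
      (fun X hX => (hA X hX).trans Finset.subset_union_left) hne helim c
      (fun T hT => (Finsupp.mem_supported ℚ c).1 hc (Finsupp.mem_support_iff.2 hT))
      (fun t _ ht => ?_) S Finset.subset_union_right
    rw [← evalIndicator_linearCombination]
    exact ht.evalIndicator_eq_zero hpI
  rw [hc_zero, map_zero]

end Independence

section InitialIdealOfP

variable {α : Type*} {𝒞 𝒟 : Set (Finset α × Finset α)}

theorem pIdeal_mono (h : 𝒞 ⊆ 𝒟) : pIdeal 𝒞 ≤ pIdeal 𝒟 :=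
  Ideal.span_mono <| Set.union_subset_union_right _ fun _ ⟨X, hX, hp⟩ => ⟨X, h hX, hp⟩

theorem exists_mem_pIdeal_restrictTo [DecidableEq α] {p : MvPolynomial α ℚ} (hp : p ∈ pIdeal 𝒞) :
    ∃ A, p ∈ pIdeal (restrictTo 𝒞 A) := by
  have mono {A B : Finset α} (h : A ⊆ B) : pIdeal (restrictTo 𝒞 A) ≤ pIdeal (restrictTo 𝒞 B) :=
    pIdeal_mono fun X hX => ⟨hX.1, hX.2.trans h⟩
  induction hp using Submodule.span_induction with
  | mem p hp =>
    obtain ⟨a, rfl⟩ | ⟨X, hX, rfl⟩ := hp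
    · exact ⟨∅, Ideal.subset_span (Or.inl ⟨a, rfl⟩)⟩
    · exact ⟨X.1 ∪ X.2, Ideal.subset_span (Or.inr ⟨X, ⟨hX, subset_rfl⟩, rfl⟩)⟩
  | zero => exact ⟨∅, zero_mem _⟩
  | add p q _ _ hp hq =>
    obtain ⟨A, hA⟩ := hp
    obtain ⟨B, hB⟩ := hq
    exact ⟨A ∪ B, add_mem (mono Finset.subset_union_left hA) (mono Finset.subset_union_right hB)⟩
  | smul r p _ hp =>
    obtain ⟨A, hA⟩ := hp
    exact ⟨A, Ideal.mul_mem_left _ r hA⟩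

variable [LinearOrder α]

theorem aIdeal_mono (h : 𝒞 ⊆ 𝒟) : aIdeal 𝒞 ≤ aIdeal 𝒟 :=
  Ideal.span_mono <| Set.union_subset_union_right _ fun _ ⟨X, hX, hp⟩ => ⟨X, h hX, hp⟩

theorem initialIdeal_pIdeal_of_support_subset {A : Finset α} (hA : ∀ X ∈ 𝒞, X.1 ∪ X.2 ⊆ A)
    (hdisj : ∀ X ∈ 𝒞, Disjoint X.1 X.2) (hne : ∀ X ∈ 𝒞, (X.1 ∪ X.2).Nonempty)
    (hswap : ∀ X ∈ 𝒞, X.swap ∈ 𝒞) (helim : SignedElimination 𝒞) :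
    initialIdeal (pIdeal 𝒞) = aIdeal 𝒞 :=
  initialIdeal_eq_of_disjoint (aIdeal_le_initialIdeal_pIdeal hdisj hswap)
    (homogeneousSubmodule_le_nbcSpan_sup_aIdeal hswap hA) (disjoint_nbcSpan_pIdeal hA hne helim)

theorem initialIdeal_pIdeal (hdisj : ∀ X ∈ 𝒞, Disjoint X.1 X.2)
    (hne : ∀ X ∈ 𝒞, (X.1 ∪ X.2).Nonempty) (hswap : ∀ X ∈ 𝒞, X.swap ∈ 𝒞)
    (helim : SignedElimination 𝒞) : initialIdeal (pIdeal 𝒞) = aIdeal 𝒞 := by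
  refine le_antisymm (initialIdeal_le_iff.2 fun k p hp hpI => ?_)
    (aIdeal_le_initialIdeal_pIdeal hdisj hswap)
  obtain ⟨q, hq, i, hi, hqi⟩ := Submodule.mem_sup.1 hpI
  obtain ⟨A, hA⟩ := exists_mem_pIdeal_restrictTo hi
  have hp_mem : p ∈ initialIdeal (pIdeal (restrictTo 𝒞 A)) :=
    (mem_initialIdeal_iff_of_isHomogeneous hp).2 (hqi ▸ Submodule.add_mem_sup hq hA)
  rw [initialIdeal_pIdeal_of_support_subset (𝒞 := restrictTo 𝒞 A) (fun X hX => hX.2)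
    (fun X hX => hdisj X hX.1) (fun X hX => hne X hX.1)
    (fun X hX => ⟨hswap X hX.1, (Finset.union_comm _ _).trans_subset hX.2⟩)
    (helim.restrictTo A)] at hp_mem
  exact aIdeal_mono (fun X hX => hX.1) hp_mem

end InitialIdealOfP

section AssociatedGraded

theorem exists_quotient_equiv_map {K M N P : Type*} [Ring K] [AddCommGroup M] [Module K M]
    [AddCommGroup N] [Module K N] [AddCommGroup P] [Module K P] {F : Submodule K M}
    {π : M →ₗ[K] N} {φ : M →ₗ[K] P} {W : Submodule K N}
    (hker : ∀ p ∈ F, π p ∈ W ↔ φ p = 0) :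
    ∃ f : (F.map π ⧸ W.comap (F.map π).subtype) ≃ₗ[K] F.map φ,
      ∀ (a : F.map π) (p : M), p ∈ F → (a : N) = π p → (f (Submodule.Quotient.mk a) : P) = φ p := by
  let g := (W.comap (F.map π).subtype).mkQ ∘ₗ π.submoduleMap F
  have hg : Function.Surjective g :=
    (Submodule.mkQ_surjective _).comp (π.submoduleMap_surjective F)
  have hgφ : LinearMap.ker g = LinearMap.ker (φ.submoduleMap F) := by
    ext p
    simpa [g, Subtype.ext_iff] using hker p p.2
  refine ⟨(g.quotKerEquivOfSurjective hg).symm ≪≫ₗ Submodule.quotEquivOfEq _ _ hgφ ≪≫ₗ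
    (φ.submoduleMap F).quotKerEquivOfSurjective (φ.submoduleMap_surjective F),
    fun a p hp hap => ?_⟩
  obtain rfl : a = π.submoduleMap F ⟨p, hp⟩ := Subtype.ext hap
  have hmk : (g.quotKerEquivOfSurjective hg).symm
      (Submodule.Quotient.mk (π.submoduleMap F ⟨p, hp⟩)) = Submodule.Quotient.mk ⟨p, hp⟩ :=
    g.quotKerEquivOfSurjective_symm_apply hg ⟨p, hp⟩
  rw [LinearEquiv.trans_apply, LinearEquiv.trans_apply, hmk]
  rfl

variable {α : Type*} {k : ℕ}

theorem pFil_eq_map_totalDegreeLT (𝒞 : Set (Finset α × Finset α)) (k : ℕ) : pFil 𝒞 k =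
    (totalDegreeLT α ℚ (k + 1)).map (Ideal.Quotient.mkₐ ℚ (pIdeal 𝒞)).toLinearMap := by
  rw [totalDegreeLT_succ, pFil]

theorem pPrev_eq_map_totalDegreeLT (𝒞 : Set (Finset α × Finset α)) (k : ℕ) : pPrev 𝒞 k =
    (totalDegreeLT α ℚ k).map (Ideal.Quotient.mkₐ ℚ (pIdeal 𝒞)).toLinearMap := by
  cases k with
  | zero => rw [totalDegreeLT_zero, Submodule.map_bot, pPrev]
  | succ k => rw [pPrev, pFil_eq_map_totalDegreeLT]

theorem exists_mem_totalDegreeLT_mk_eq {𝒞 : Set (Finset α × Finset α)} (a : pFil 𝒞 k) :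
    ∃ p ∈ totalDegreeLT α ℚ (k + 1), (a : PAlg 𝒞) = Ideal.Quotient.mk (pIdeal 𝒞) p := by
  obtain ⟨p, hp, hpa⟩ := (pFil_eq_map_totalDegreeLT 𝒞 k).le a.2
  exact ⟨p, hp, hpa.symm⟩

variable [LinearOrder α] {𝒞 : Set (Finset α × Finset α)}

theorem aGrade_eq_map_homogeneousComponent (𝒞 : Set (Finset α × Finset α)) (k : ℕ) :
    aGrade 𝒞 k = (restrictTotalDegree α ℚ k).map
      ((Ideal.Quotient.mkₐ ℚ (aIdeal 𝒞)).toLinearMap ∘ₗ homogeneousComponent k) := by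
  have himage : (restrictTotalDegree α ℚ k).map (homogeneousComponent k) =
      homogeneousSubmodule α ℚ k := by
    refine le_antisymm (Submodule.map_le_iff_le_comap.2 fun p _ => homogeneousComponent_mem k p)
      fun p hp => ⟨p, ?_, homogeneousComponent_eq_self hp⟩
    rw [← totalDegreeLT_succ]
    exact homogeneousSubmodule_le_totalDegreeLT k.lt_succ_self hp
  rw [Submodule.map_comp, himage, aGrade]

theorem exists_pGr_equiv_aGrade (hinit : initialIdeal (pIdeal 𝒞) = aIdeal 𝒞) (k : ℕ) :
    ∃ f : pGr 𝒞 k ≃ₗ[ℚ] aGrade 𝒞 k, ∀ (a : pFil 𝒞 k) (p : MvPolynomial α ℚ),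
      p ∈ totalDegreeLT α ℚ (k + 1) → (a : PAlg 𝒞) = Ideal.Quotient.mk (pIdeal 𝒞) p →
      (f (Submodule.Quotient.mk a) : AAlg 𝒞) =
        Ideal.Quotient.mk (aIdeal 𝒞) (homogeneousComponent k p) := by
  rw [aGrade_eq_map_homogeneousComponent, totalDegreeLT_succ]
  refine exists_quotient_equiv_map fun p hp => ?_
  rw [← totalDegreeLT_succ] at hp
  rw [pPrev_eq_map_totalDegreeLT, AlgHom.toLinearMap_apply, mkₐ_mem_map_totalDegreeLT_iff,
    ← homogeneousComponent_mem_initialIdeal_iff hp, hinit]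
  exact Ideal.Quotient.eq_zero_iff_mem.symm

theorem pAlg_associated_graded_general (𝒞 : Set (Finset α × Finset α))
    (hsigned : ∀ X ∈ 𝒞, Disjoint X.1 X.2) (hne : ∀ X ∈ 𝒞, (X.1 ∪ X.2).Nonempty)
    (hswap : ∀ X ∈ 𝒞, X.swap ∈ 𝒞) (helim : SignedElimination 𝒞) :
    ∃ f : ∀ k : ℕ, pGr 𝒞 k ≃ₗ[ℚ] aGrade 𝒞 k,
      (∀ a : pFil 𝒞 0, (a : PAlg 𝒞) = 1 → (f 0 (Submodule.Quotient.mk a) : AAlg 𝒞) = 1) ∧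
      ∀ (k l : ℕ) (a : pFil 𝒞 k) (b : pFil 𝒞 l) (c : pFil 𝒞 (k + l)),
        (c : PAlg 𝒞) = (a : PAlg 𝒞) * (b : PAlg 𝒞) →
        (f (k + l) (Submodule.Quotient.mk c) : AAlg 𝒞) =
          (f k (Submodule.Quotient.mk a) : AAlg 𝒞) * (f l (Submodule.Quotient.mk b) : AAlg 𝒞) := by
  choose f hf using exists_pGr_equiv_aGrade (initialIdeal_pIdeal hsigned hne hswap helim)
  refine ⟨f, fun a ha => ?_, fun k l a b c hc => ?_⟩
  · rw [hf 0 a 1 (C_mem_totalDegreeLT_one 1) (by rw [ha, map_one]),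
      homogeneousComponent_eq_self (isHomogeneous_one α ℚ), map_one]
  · obtain ⟨p, hp, hpa⟩ := exists_mem_totalDegreeLT_mk_eq a
    obtain ⟨q, hq, hqb⟩ := exists_mem_totalDegreeLT_mk_eq b
    rw [hf k a p hp hpa, hf l b q hq hqb, ← map_mul, ← homogeneousComponent_add_mul hp hq]
    exact hf (k + l) c (p * q) (mul_mem_totalDegreeLT (by omega) hp hq)
      (by rw [hc, hpa, hqb, map_mul])

end AssociatedGraded

/-- If `𝒞` is the set of signed circuits of a loop-free oriented
matroid on `E`, then the associated graded algebra of the degree filtration on `P(𝒞)`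
is isomorphic as a graded `ℚ`-algebra to `𝔸(𝒞)`: there are linear equivalences
`f k : Pᵏ/Pᵏ⁻¹ ≃ 𝔸(𝒞)ₖ` sending the class of `1` to `1` and compatible with
multiplication. -/
theorem pAlg_associated_graded (𝒞 : Set (Finset E × Finset E))
    (hsigned : ∀ X ∈ 𝒞, Disjoint X.1 X.2)
    (hcard : ∀ X ∈ 𝒞, 1 < (X.1 ∪ X.2).card)
    (hopp : ∀ X : Finset E × Finset E, X ∈ 𝒞 ↔ (X.2, X.1) ∈ 𝒞)
    (hmin : ∀ X ∈ 𝒞, ∀ Y ∈ 𝒞, X.1 ∪ X.2 ⊆ Y.1 ∪ Y.2 → X = Y ∨ X = (Y.2, Y.1))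
    (helim : ∀ X ∈ 𝒞, ∀ Y ∈ 𝒞, X ≠ (Y.2, Y.1) → ∀ e ∈ X.1 ∩ Y.2,
      ∃ Z ∈ 𝒞, Z.1 ⊆ (X.1 ∪ Y.1).erase e ∧ Z.2 ⊆ (X.2 ∪ Y.2).erase e) :
    ∃ f : ∀ k : ℕ, pGr 𝒞 k ≃ₗ[ℚ] ↥(aGrade 𝒞 k),
      (∀ a : ↥(pFil 𝒞 0), (a : PAlg 𝒞) = 1 →
        ((f 0 (Submodule.Quotient.mk a) : ↥(aGrade 𝒞 0)) : AAlg 𝒞) = 1) ∧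
      (∀ (k l : ℕ) (a : ↥(pFil 𝒞 k)) (b : ↥(pFil 𝒞 l)) (c : ↥(pFil 𝒞 (k + l))),
        (c : PAlg 𝒞) = (a : PAlg 𝒞) * (b : PAlg 𝒞) →
        ((f (k + l) (Submodule.Quotient.mk c) : ↥(aGrade 𝒞 (k + l))) : AAlg 𝒞) =
          ((f k (Submodule.Quotient.mk a) : ↥(aGrade 𝒞 k)) : AAlg 𝒞) *
            ((f l (Submodule.Quotient.mk b) : ↥(aGrade 𝒞 l)) : AAlg 𝒞)) := by
  exact pAlg_associated_graded_general 𝒞 hsigned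
    (fun X hX => Finset.card_pos.1 (Nat.zero_lt_one.trans (hcard X hX)))
    (fun X hX => (hopp X).1 hX) helim
end
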